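/- arXiv:1104.0440 — 6 statements merged into one kernel-verified Lean document; each statement's English description precedes it below -/
import Mathlib

section
/- Assume (H) and that all zeros of A are simple, i.e., A′(t) ≠ 0 whenever A(t) = 0. Then the equation (N) has exactly one C¹, T-periodic solution with nonconstant sign. -/
/-!
After the change of unknown `x ↦ -x` one may assume `B > 0`. The numerical assumption then provides
`lam, a > 0` with `A' ≥ -a` and `lam * (1 + c * T) + a / lam < B`, where `c` bounds `|C|`
(`hyp_of_bounds`, structure `Hyp`).

**Existence.** Let `(p, q)` be an interval between two consecutive zeros of `A`, an *arch*, on which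
`A > 0`. Then `u = -x` should be a positive solution of `u' = A / u - B + C u` vanishing at both
ends. The line `lam * (q - t)` is an upper barrier, because `A t ≤ a * (q - t)`, and `d * A` is a
lower barrier for small `d > 0`. Replacing `A` by `A + e` removes the singularity and keeps both
barriers (`exists_reg`); the resulting solutions are monotone in `e` (`reg_mono`) and their limit as
`e → 0` is the desired `u` (`exists_arch_sol`).

The ratio `v = A / u` satisfies `u v' = A' + B v - v ^ 2 - C u v`. At either end of the arch
`∫ dt / u` diverges logarithmically, which forces `v` to converge there to the larger root
`(B + √(B ^ 2 + 4 A')) / 2` of the limiting quadratic (`ratio_tendsto_left`,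
`ratio_tendsto_right`). At the right end this needs `v` to stay above the smaller root, which is what
the barrier `lam * (q - t)` gives. Hence `x' = A / x + B + C x` tends to
`(B - √(B ^ 2 + 4 A')) / 2` at both ends. Arches with `A < 0` reduce to this case by the time
reversal `x(t) ↦ -x(-t)`. Since the limit of `x'` at a zero of `A` is the same from both sides, the
arches glue to a `C¹` solution (`exists_sol`).

**Uniqueness.** A solution vanishing at both ends of an arch with `A > 0` is negative on it, and for
two of them `(x - y) ^ 2 * exp (-2 c t)` is nonincreasing, so they agree (`eq_of_vanish`). In
particular the glued solution agrees with its translate by `T`, hence is periodic. Finally a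
periodic solution with a zero vanishes at every zero `z` of `A` (`vanish_of_periodic`): if
`x z > 0`, the same barrier gives `x t > lam * (t - z)` on `[z, z + T]`, so `x` has no zero at all.
-/

open Set Filter Topology

namespace Abel

/-! ### Trapped solutions of the regularised equation -/

/-- A function that starts nonpositive and has nonpositive derivative wherever it is positive stays
nonpositive. Most barrier and comparison arguments below go through this lemma. -/
lemma nonpos_of_barrier {g g' : ℝ → ℝ} {p t : ℝ} (hpt : p ≤ t)
    (hc : ContinuousOn g (Icc p t)) (hp : g p ≤ 0)
    (hd : ∀ s ∈ Ioo p t, HasDerivAt g (g' s) s)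
    (hs : ∀ s ∈ Ioo p t, 0 < g s → g' s ≤ 0) : g t ≤ 0 := by
  by_contra! hgt
  have hcomp : IsCompact (Icc p t ∩ g ⁻¹' Iic 0) :=
    isCompact_Icc.of_isClosed_subset (hc.preimage_isClosed_of_isClosed isClosed_Icc isClosed_Iic)
      inter_subset_left
  obtain ⟨r, ⟨hr, hgr⟩, hmax⟩ := hcomp.exists_isGreatest ⟨p, ⟨le_rfl, hpt⟩, hp⟩
  have hrt : r < t := by
    rcases hr.2.lt_or_eq with h | h
    · exact h
    · rw [h] at hgr
      exact absurd hgr (not_le.2 hgt)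
  have hpos : ∀ s ∈ Ioo r t, 0 < g s := by
    intro s hsr
    by_contra! hle
    exact absurd (hmax ⟨⟨hr.1.trans hsr.1.le, hsr.2.le⟩, hle⟩) (not_le.2 hsr.1)
  have hsub : ∀ s ∈ Ioo r t, s ∈ Ioo p t := fun s h => ⟨hr.1.trans_lt h.1, h.2⟩
  have hanti : AntitoneOn g (Icc r t) := by
    refine antitoneOn_of_deriv_nonpos (convex_Icc r t) (hc.mono (Icc_subset_Icc_left hr.1)) ?_ ?_
    · rw [interior_Icc]
      exact fun s h => (hd s (hsub s h)).differentiableAt.differentiableWithinAt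
    · rw [interior_Icc]
      intro s h
      rw [(hd s (hsub s h)).deriv]
      exact hs s (hsub s h) (hpos s h)
  have := hanti ⟨le_rfl, hrt.le⟩ ⟨hrt.le, le_rfl⟩ hrt.le
  exact absurd (this.trans hgr) (not_le.2 hgt)

/-- The normalised assumptions: `B > 0`, and (H) is expressed through a slope `lam` for which the
lines of slope `±lam` through zeros of `A` are barriers. Here `a` bounds `-A'` and `c` bounds `|C|`. -/
structure Hyp (T : ℝ) (A B C : ℝ → ℝ) (lam a c : ℝ) : Prop where
  T_pos : 0 < T
  contA : ContDiff ℝ 1 A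
  contB : Continuous B
  contC : Continuous C
  perA : Function.Periodic A T
  perB : Function.Periodic B T
  perC : Function.Periodic C T
  zero : ∃ t, A t = 0
  simple : ∀ t, A t = 0 → deriv A t ≠ 0
  lam_pos : 0 < lam
  a_pos : 0 < a
  c_nonneg : 0 ≤ c
  dA : ∀ t, -a ≤ deriv A t
  absC : ∀ t, |C t| ≤ c
  ltB : ∀ t, lam * (1 + c * T) + a / lam < B t

namespace Hyp

variable {T lam a c : ℝ} {A B C : ℝ → ℝ}

lemma hasDerivA (h : Hyp T A B C lam a c) (t : ℝ) : HasDerivAt A (deriv A t) t :=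
  (h.contA.differentiable (by simp) t).hasDerivAt

lemma contdA (h : Hyp T A B C lam a c) : Continuous (deriv A) := h.contA.continuous_deriv (by simp)

lemma A_le (h : Hyp T A B C lam a c) {q t : ℝ} (hq : A q = 0) (ht : t ≤ q) :
    A t ≤ a * (q - t) := by
  have := (convex_univ (𝕜 := ℝ) (E := ℝ)).mul_sub_le_image_sub_of_le_deriv (f := A) (C := -a)
    h.contA.continuous.continuousOn (h.contA.differentiable (by simp)).differentiableOn
    (fun x _ => h.dA x) t (mem_univ _) q (mem_univ _) ht
  rw [hq] at this
  linarith

lemma B_pos (h : Hyp T A B C lam a c) (t : ℝ) : 0 < B t := by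
  have h1 := h.ltB t
  have h2 := h.lam_pos
  have h3 := h.a_pos
  have h4 := h.c_nonneg
  have h5 := h.T_pos
  have : 0 < lam * (1 + c * T) + a / lam := by positivity
  linarith

end Hyp

/-- Picard–Lindelöf on a whole interval, for a bounded field that is globally Lipschitz in `x`. -/
lemma exists_picard {f : ℝ → ℝ → ℝ} {p q x₀ L K : ℝ} (hpq : p < q)
    (hL : 0 ≤ L) (hK : 0 ≤ K)
    (hlip : ∀ t ∈ Icc p q, ∀ x y, |f t x - f t y| ≤ K * |x - y|)
    (hcont : ∀ x, ContinuousOn (fun t => f t x) (Icc p q))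
    (hbd : ∀ t ∈ Icc p q, ∀ x, |f t x| ≤ L) :
    ∃ u : ℝ → ℝ, u p = x₀ ∧ ContinuousOn u (Icc p q) ∧
      ∀ t ∈ Ioo p q, HasDerivAt u (f t (u t)) t := by
  have hP : IsPicardLindelof f (⟨p, le_rfl, hpq.le⟩ : Icc p q) x₀
      ⟨L * (q - p), mul_nonneg hL (sub_pos.2 hpq).le⟩ 0 ⟨L, hL⟩ ⟨K, hK⟩ := by
    refine ⟨fun t ht => ?_, fun x _ => hcont x, fun t ht x _ => hbd t ht x, ?_⟩
    · refine LipschitzOnWith.of_dist_le_mul fun x _ y _ => ?_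
      rw [Real.dist_eq, Real.dist_eq]
      exact hlip t ht x y
    · simp only [sub_self, NNReal.coe_zero, sub_zero]
      rw [max_eq_left (sub_pos.2 hpq).le]
      exact le_rfl
  obtain ⟨u, hu0, hu⟩ := hP.exists_eq_forall_mem_Icc_hasDerivWithinAt₀
  refine ⟨u, hu0, fun t ht => (hu t ht).continuousWithinAt, fun t ht => ?_⟩
  exact (hu t (Ioo_subset_Icc_self ht)).hasDerivAt (Icc_mem_nhds ht.1 ht.2)

lemma abs_div_max_sub_le {k m d x y : ℝ} (hk : 0 < k) (hd : 0 < d) (hm : m = d * k) :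
    |k / max x m - k / max y m| ≤ 1 / (d ^ 2 * k) * |x - y| := by
  have hm0 : 0 < m := by rw [hm]; positivity
  have hx : m ≤ max x m := le_max_right _ _
  have hy : m ≤ max y m := le_max_right _ _
  have hx0 : 0 < max x m := hm0.trans_le hx
  have hy0 : 0 < max y m := hm0.trans_le hy
  have e : k / max x m - k / max y m = k / (max x m * max y m) * (max y m - max x m) := by
    field_simp
  have hl : |max y m - max x m| ≤ |x - y| := by
    rw [abs_sub_comm]
    simpa using abs_max_sub_max_le_abs x y m
  rw [e, abs_mul, abs_of_pos (by positivity)]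
  have : k / (max x m * max y m) ≤ 1 / (d ^ 2 * k) := by
    have h1 : m * m ≤ max x m * max y m := mul_le_mul hx hy hm0.le hx0.le
    calc k / (max x m * max y m) ≤ k / (m * m) := by gcongr
      _ = 1 / (d ^ 2 * k) := by rw [hm]; field_simp
  gcongr

/-- The equation `u' = (A + e) / u - B + C * min u (lam * T)` has a solution on an arch trapped
between the barriers `d * (A + e)` and `lam * (q - t + e / a)`. -/
lemma exists_reg {T lam a c : ℝ} {A B C : ℝ → ℝ} (h : Hyp T A B C lam a c) {p q d L e : ℝ}
    (hpq : p < q) (hp : A p = 0) (hq : A q = 0)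
    (hA : ∀ t ∈ Icc p q, 0 ≤ A t) (hd : 0 < d)
    (hd1 : ∀ t ∈ Icc p q, d * deriv A t + B t + c * (lam * T) ≤ 1 / d) (hd2 : d * a ≤ lam)
    (hL : ∀ t ∈ Icc p q, 1 / d + |B t| + c * (lam * T) ≤ L) (he : 0 < e) :
    ∃ u : ℝ → ℝ, u p = d * e ∧ ContinuousOn u (Icc p q) ∧
      (∀ t ∈ Ioo p q, HasDerivAt u ((A t + e) / u t - B t + C t * min (u t) (lam * T)) t) ∧
      ∀ t ∈ Icc p q, d * (A t + e) ≤ u t ∧ u t ≤ lam * (q - t + e / a) := by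
  have hlam := h.lam_pos
  have ha := h.a_pos
  have hc := h.c_nonneg
  have hT := h.T_pos
  have hR : 0 ≤ lam * T := by positivity
  -- the cutoff makes the field bounded and Lipschitz; it is inactive on the trapping region
  set f : ℝ → ℝ → ℝ := fun t x =>
    (A t + e) / max x (d * (A t + e)) - B t + C t * max 0 (min x (lam * T)) with hf
  have hAe : ∀ t ∈ Icc p q, 0 < A t + e := fun t ht => by linarith [hA t ht]
  have hclip : ∀ t x, |C t * max 0 (min x (lam * T))| ≤ c * (lam * T) := by
    intro t x
    rw [abs_mul]
    have h1 : |max 0 (min x (lam * T))| ≤ lam * T := by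
      rw [abs_of_nonneg (le_max_left _ _)]
      exact max_le hR (min_le_right _ _)
    exact mul_le_mul (h.absC t) h1 (abs_nonneg _) hc
  have hquot : ∀ t ∈ Icc p q, ∀ x, (A t + e) / max x (d * (A t + e)) ≤ 1 / d := by
    intro t ht x
    have h1 := hAe t ht
    have h2 : 0 < d * (A t + e) := by positivity
    calc (A t + e) / max x (d * (A t + e)) ≤ (A t + e) / (d * (A t + e)) := by
          gcongr; exact le_max_right _ _
      _ = 1 / d := by field_simp
  have hquot0 : ∀ t ∈ Icc p q, ∀ x, 0 ≤ (A t + e) / max x (d * (A t + e)) := by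
    intro t ht x
    have h1 := hAe t ht
    have h2 : 0 < d * (A t + e) := by positivity
    exact div_nonneg h1.le (h2.le.trans (le_max_right _ _))
  obtain ⟨u, hu0, huc, hud⟩ := exists_picard (f := f) (p := p) (q := q) (x₀ := d * e)
    (L := L) (K := 1 / (d ^ 2 * e) + c) hpq
    (by
      have := hL p ⟨le_rfl, hpq.le⟩
      have : 0 ≤ 1 / d + |B p| + c * (lam * T) := by positivity
      linarith)
    (by positivity)
    (by
      intro t ht x y
      have h1 := hAe t ht
      have h2 := abs_div_max_sub_le (x := x) (y := y) h1 hd rfl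
      have h3 : 1 / (d ^ 2 * (A t + e)) ≤ 1 / (d ^ 2 * e) := by
        gcongr; linarith [hA t ht]
      have h4 : |max 0 (min x (lam * T)) - max 0 (min y (lam * T))| ≤ |x - y| := by
        have h5 := abs_max_sub_max_le_abs (min x (lam * T)) (min y (lam * T)) 0
        have h6 := abs_min_sub_min_le_max x (lam * T) y (lam * T)
        simp only [sub_self, abs_zero] at h6
        rw [max_eq_left (abs_nonneg _)] at h6
        rw [max_comm 0, max_comm 0]
        exact h5.trans h6
      have e1 : f t x - f t y = ((A t + e) / max x (d * (A t + e)) -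
          (A t + e) / max y (d * (A t + e))) +
          C t * (max 0 (min x (lam * T)) - max 0 (min y (lam * T))) := by
        simp only [hf]; ring
      rw [e1]
      refine (abs_add_le _ _).trans ?_
      rw [abs_mul, add_mul]
      refine add_le_add (h2.trans ?_) (mul_le_mul (h.absC t) h4 (abs_nonneg _) hc)
      gcongr)
    (by
      intro x
      have := h.contA.continuous
      have := h.contB
      have := h.contC
      refine ContinuousOn.add (ContinuousOn.sub (ContinuousOn.div (by fun_prop) (by fun_prop) ?_)
        (by fun_prop)) (by fun_prop)
      intro t ht
      have h1 := hAe t ht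
      have h2 : 0 < d * (A t + e) := by positivity
      exact (h2.trans_le (le_max_right _ _)).ne')
    (by
      intro t ht x
      refine le_trans ?_ (hL t ht)
      have h1 := hclip t x
      have h2 := hquot t ht x
      have h3 := hquot0 t ht x
      have h4 := abs_le.1 h1
      have h5 := le_abs_self (B t)
      have h6 := neg_abs_le (B t)
      rw [abs_le]
      simp only [hf]
      constructor
      · have : 0 < 1 / d := by positivity
        linarith
      · linarith)
  have hlow : ∀ t ∈ Icc p q, d * (A t + e) ≤ u t := by
    intro t ht
    have hsub : ∀ s ∈ Ioo p t, s ∈ Ioo p q := fun s hs => ⟨hs.1, hs.2.trans_le ht.2⟩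
    have := nonpos_of_barrier (g := fun s => d * (A s + e) - u s)
      (g' := fun s => d * deriv A s - f s (u s)) ht.1
      (by
        have := h.contA.continuous
        exact ContinuousOn.sub (by fun_prop) (huc.mono (Icc_subset_Icc_right ht.2)))
      (by simp [hp, hu0])
      (fun s hs => (((h.hasDerivA s).add_const e).const_mul d).sub (hud s (hsub s hs)))
      (by
        intro s hs hpos
        have hsI := Ioo_subset_Icc_self (hsub s hs)
        have h1 := hAe s hsI
        have h2 := hd1 s hsI
        have h3 := abs_le.1 (hclip s (u s))
        have h4 : max (u s) (d * (A s + e)) = d * (A s + e) := max_eq_right (by linarith)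
        have h5 : (A s + e) / (d * (A s + e)) = 1 / d := by field_simp
        simp only [hf, h4, h5]
        linarith)
    linarith
  have hupp : ∀ t ∈ Icc p q, u t ≤ lam * (q - t + e / a) := by
    intro t ht
    have hsub : ∀ s ∈ Ioo p t, s ∈ Ioo p q := fun s hs => ⟨hs.1, hs.2.trans_le ht.2⟩
    have := nonpos_of_barrier (g := fun s => u s - lam * (q - s + e / a))
      (g' := fun s => f s (u s) - lam * (-1)) ht.1
      (by exact ContinuousOn.sub (huc.mono (Icc_subset_Icc_right ht.2)) (by fun_prop))
      (by
        have h1 : d * e ≤ lam * (e / a) := by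
          rw [← mul_div_assoc, le_div_iff₀ ha]
          nlinarith
        have h2 : 0 < lam * (q - p) := mul_pos hlam (sub_pos.2 hpq)
        simp only [hu0]
        linarith)
      (fun s hs => (hud s (hsub s hs)).sub
        ((((hasDerivAt_id s).const_sub q).add_const (e / a)).const_mul lam))
      (by
        intro s hs hpos
        have hs' := hsub s hs
        have hsI := Ioo_subset_Icc_self hs'
        have h1 := hAe s hsI
        have h3 := abs_le.1 (hclip s (u s))
        have hw : 0 < lam * (q - s + e / a) := by
          have : 0 < q - s := sub_pos.2 hs'.2
          positivity
        have h4 : (A s + e) / max (u s) (d * (A s + e)) ≤ a / lam := by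
          have h5 : lam * (q - s + e / a) ≤ max (u s) (d * (A s + e)) :=
            (sub_pos.1 hpos).le.trans (le_max_left _ _)
          have h6 : A s + e ≤ a * (q - s + e / a) := by
            have := h.A_le hq hs'.2.le
            have e1 : a * (q - s + e / a) = a * (q - s) + e := by field_simp
            linarith
          rw [div_le_div_iff₀ (hw.trans_le h5) hlam]
          nlinarith
        have h7 := h.ltB s
        simp only [hf]
        nlinarith)
    linarith
  refine ⟨u, hu0, huc, fun t ht => ?_, fun t ht => ⟨hlow t ht, hupp t ht⟩⟩
  have hI := Ioo_subset_Icc_self ht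
  have h1 := hlow t hI
  have h2 : 0 < u t := lt_of_lt_of_le (mul_pos hd (hAe t hI)) h1
  have h3 := hud t ht
  simp only [hf, max_eq_left h1] at h3
  rwa [max_eq_right (le_min h2.le hR)] at h3

/-! ### Removing the regularisation -/

/-- Solutions of the regularised equation increase with the regularisation parameter and the initial
value. -/
lemma reg_mono {lam T c p q e₁ e₂ : ℝ} {A B C u₁ u₂ : ℝ → ℝ}
    (hc : ∀ t, |C t| ≤ c) (he : 0 < e₁) (hee : e₁ ≤ e₂) (hA : ∀ t ∈ Icc p q, 0 ≤ A t)
    (h0 : u₁ p ≤ u₂ p)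
    (hc₁ : ContinuousOn u₁ (Icc p q)) (hc₂ : ContinuousOn u₂ (Icc p q))
    (hd₁ : ∀ t ∈ Ioo p q,
      HasDerivAt u₁ ((A t + e₁) / u₁ t - B t + C t * min (u₁ t) (lam * T)) t)
    (hd₂ : ∀ t ∈ Ioo p q,
      HasDerivAt u₂ ((A t + e₂) / u₂ t - B t + C t * min (u₂ t) (lam * T)) t)
    (hpos : ∀ t ∈ Icc p q, 0 < u₂ t) {t : ℝ} (ht : t ∈ Icc p q) : u₁ t ≤ u₂ t := by
  have hsub : ∀ s ∈ Ioo p t, s ∈ Ioo p q := fun s hs => ⟨hs.1, hs.2.trans_le ht.2⟩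
  have hexp : ∀ s : ℝ, HasDerivAt (fun s => Real.exp (-c * s)) (Real.exp (-c * s) * (-c)) s := by
    intro s
    simpa using ((hasDerivAt_id s).const_mul (-c)).exp
  have := nonpos_of_barrier (g := fun s => (u₁ s - u₂ s) * Real.exp (-c * s))
    (g' := fun s => (((A s + e₁) / u₁ s - B s + C s * min (u₁ s) (lam * T)) -
      ((A s + e₂) / u₂ s - B s + C s * min (u₂ s) (lam * T))) * Real.exp (-c * s) +
      (u₁ s - u₂ s) * (Real.exp (-c * s) * (-c))) ht.1
    (((hc₁.sub hc₂).mono (Icc_subset_Icc_right ht.2)).mul (by fun_prop))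
    (mul_nonpos_of_nonpos_of_nonneg (by linarith) (Real.exp_pos _).le)
    (fun s hs => ((hd₁ s (hsub s hs)).sub (hd₂ s (hsub s hs))).mul (hexp s))
    (by
      intro s hs hg
      have hI := Ioo_subset_Icc_self (hsub s hs)
      have h1 : 0 < u₁ s - u₂ s := pos_of_mul_pos_left hg (Real.exp_pos _).le
      have h2 := hpos s hI
      have h3 := hA s hI
      have h4 : (A s + e₁) / u₁ s ≤ (A s + e₂) / u₂ s := by
        gcongr <;> linarith
      have h5 : C s * (min (u₁ s) (lam * T) - min (u₂ s) (lam * T)) ≤ c * (u₁ s - u₂ s) := by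
        have h6 := abs_min_sub_min_le_max (u₁ s) (lam * T) (u₂ s) (lam * T)
        simp only [sub_self, abs_zero] at h6
        rw [max_eq_left (abs_nonneg _), abs_of_pos h1] at h6
        refine (le_abs_self _).trans ?_
        rw [abs_mul]
        exact mul_le_mul (hc s) h6 (abs_nonneg _) ((abs_nonneg _).trans (hc s))
      have h7 : ((A s + e₁) / u₁ s - B s + C s * min (u₁ s) (lam * T)) -
        ((A s + e₂) / u₂ s - B s + C s * min (u₂ s) (lam * T)) - c * (u₁ s - u₂ s) ≤ 0 := by
        linarith
      have h8 := mul_nonpos_of_nonpos_of_nonneg h7 (Real.exp_pos (-c * s)).le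
      linarith)
  have h9 := nonpos_of_mul_nonpos_left this (Real.exp_pos _)
  linarith

/-- On an arch with `A > 0` the singular equation `u' = A / u - B + C u` has a positive solution
that vanishes at both ends at a linear rate. -/
lemma exists_arch_sol {T lam a c : ℝ} {A B C : ℝ → ℝ} (h : Hyp T A B C lam a c) {p q : ℝ}
    (hpq : p < q) (hlen : q - p ≤ T) (hp : A p = 0) (hq : A q = 0)
    (hA : ∀ t ∈ Ioo p q, 0 < A t) :
    ∃ (u : ℝ → ℝ) (d L : ℝ), 0 < d ∧ 0 < L ∧ ∀ t ∈ Ioo p q,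
      HasDerivAt u (A t / u t - B t + C t * u t) t ∧ d * A t ≤ u t ∧
      u t ≤ lam * (q - t) ∧ u t ≤ L * (t - p) := by
  have hlam := h.lam_pos
  have ha := h.a_pos
  have hc := h.c_nonneg
  have hT := h.T_pos
  have hA' : ∀ t ∈ Icc p q, 0 ≤ A t := by
    intro t ht
    rcases ht.1.eq_or_lt with h1 | h1
    · rw [← h1, hp]
    rcases ht.2.eq_or_lt with h2 | h2
    · rw [h2, hq]
    exact (hA t ⟨h1, h2⟩).le
  obtain ⟨M₀, hM₀⟩ := isCompact_Icc.exists_bound_of_continuousOn (s := Icc p q)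
    h.contdA.continuousOn
  obtain ⟨N₀, hN₀⟩ := isCompact_Icc.exists_bound_of_continuousOn (s := Icc p q)
    h.contB.continuousOn
  have hpI : p ∈ Icc p q := ⟨le_rfl, hpq.le⟩
  have hM0 : 0 ≤ M₀ := (norm_nonneg _).trans (hM₀ p hpI)
  have hN0 : 0 ≤ N₀ := (norm_nonneg _).trans (hN₀ p hpI)
  -- `d = 1 / D` is small enough for `d * (A + e)` to be a lower barrier and to start below the
  -- upper one
  set D : ℝ := 1 + M₀ + N₀ + c * (lam * T) + a / lam with hD
  have hcl : 0 ≤ c * (lam * T) := by positivity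
  have hal : 0 ≤ a / lam := by positivity
  have hD1 : 1 ≤ D := by linarith
  have hD0 : 0 < D := by linarith
  set d : ℝ := 1 / D with hdD
  have hd : 0 < d := by positivity
  have hdle : d ≤ 1 := by rw [hdD, div_le_one hD0]; exact hD1
  have hdi : 1 / d = D := by rw [hdD]; field_simp
  have hd1 : ∀ t ∈ Icc p q, d * deriv A t + B t + c * (lam * T) ≤ 1 / d := by
    intro t ht
    have h1 := hM₀ t ht
    have h2 := hN₀ t ht
    rw [Real.norm_eq_abs] at h1 h2
    have h3 := le_abs_self (B t)
    have h4 : d * deriv A t ≤ M₀ := by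
      have := le_abs_self (deriv A t)
      nlinarith [abs_nonneg (deriv A t)]
    rw [hdi]
    linarith
  have hd2 : d * a ≤ lam := by
    have : a / lam ≤ D := by linarith
    rw [div_le_iff₀ hlam] at this
    rw [hdD, one_div, inv_mul_le_iff₀ hD0]
    exact this
  set L : ℝ := 1 / d + N₀ + c * (lam * T) with hLdef
  have hL0 : 0 < L := by have : 0 < 1 / d := by positivity
                         linarith
  have hL : ∀ t ∈ Icc p q, 1 / d + |B t| + c * (lam * T) ≤ L := by
    intro t ht
    have h2 := hN₀ t ht
    rw [Real.norm_eq_abs] at h2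
    linarith
  set e : ℕ → ℝ := fun n => 1 / ((n : ℝ) + 1) with hedef
  have he : ∀ n, 0 < e n := fun n => Nat.one_div_pos_of_nat
  have helim : Tendsto e atTop (𝓝 0) := tendsto_one_div_add_atTop_nhds_zero_nat
  have heanti : ∀ n m, n ≤ m → e m ≤ e n := fun n m hnm => Nat.one_div_le_one_div hnm
  choose U hU0 hUc hUd hUb using fun n => exists_reg h hpq hp hq hA' hd hd1 hd2 hL (he n)
  have hUpos : ∀ n, ∀ t ∈ Icc p q, 0 < U n t := fun n t ht =>
    lt_of_lt_of_le (mul_pos hd (by linarith [hA' t ht, he n])) (hUb n t ht).1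
  have hanti : ∀ t ∈ Icc p q, Antitone fun n => U n t := by
    intro t ht n m hnm
    refine reg_mono h.absC (he m) (heanti n m hnm) hA' ?_ (hUc m) (hUc n) (hUd m) (hUd n)
      (hUpos n) ht
    rw [hU0, hU0]
    exact mul_le_mul_of_nonneg_left (heanti n m hnm) hd.le
  -- the monotone limit solves the integrated equation by dominated convergence
  set u : ℝ → ℝ := fun t => ⨅ n, U n t with hu
  have hlim : ∀ t ∈ Icc p q, Tendsto (fun n => U n t) atTop (𝓝 (u t)) := fun t ht =>
    tendsto_atTop_ciInf (hanti t ht) ⟨0, by rintro _ ⟨n, rfl⟩; exact (hUpos n t ht).le⟩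
  have hFb : ∀ n, ∀ t ∈ Icc p q,
      |(A t + e n) / U n t - B t + C t * min (U n t) (lam * T)| ≤ L := by
    intro n t ht
    refine le_trans ?_ (hL t ht)
    have h1 := hUpos n t ht
    have h2 : (A t + e n) / U n t ≤ 1 / d := by
      rw [div_le_div_iff₀ h1 hd]
      linarith [(hUb n t ht).1]
    have h3 : 0 ≤ (A t + e n) / U n t :=
      div_nonneg (by linarith [hA' t ht, he n]) h1.le
    have h4 : |C t * min (U n t) (lam * T)| ≤ c * (lam * T) := by
      rw [abs_mul]
      refine mul_le_mul (h.absC t) ?_ (abs_nonneg _) hc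
      rw [abs_of_nonneg (le_min h1.le (by positivity))]
      exact min_le_right _ _
    have h4 := abs_le.1 h4
    have h5 := le_abs_self (B t)
    have h6 := neg_abs_le (B t)
    have : 0 < 1 / d := by positivity
    rw [abs_le]
    constructor <;> linarith
  have hlow : ∀ t ∈ Icc p q, d * A t ≤ u t := by
    intro t ht
    refine ge_of_tendsto' (hlim t ht) fun n => ?_
    nlinarith [(hUb n t ht).1, he n]
  have hupq : ∀ t ∈ Icc p q, u t ≤ lam * (q - t) := by
    intro t ht
    have h1 : Tendsto (fun n => lam * (q - t + e n / a)) atTop (𝓝 (lam * (q - t + 0 / a))) :=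
      ((helim.div_const a).const_add _).const_mul _
    simp only [zero_div, add_zero] at h1
    exact le_of_tendsto_of_tendsto' (hlim t ht) h1 fun n => (hUb n t ht).2
  have hupp : ∀ t ∈ Icc p q, u t ≤ L * (t - p) := by
    intro t ht
    have h1 : Tendsto (fun n => d * e n + L * (t - p)) atTop (𝓝 (d * 0 + L * (t - p))) :=
      (helim.const_mul _).add_const _
    rw [mul_zero, zero_add] at h1
    refine le_of_tendsto_of_tendsto' (hlim t ht) h1 fun n => ?_
    have hsub : ∀ s ∈ Ioo p t, s ∈ Ioo p q := fun s hs => ⟨hs.1, hs.2.trans_le ht.2⟩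
    have := nonpos_of_barrier (g := fun s => U n s - L * (s - p) - d * e n)
      (g' := fun s => ((A s + e n) / U n s - B s + C s * min (U n s) (lam * T)) - L * 1) ht.1
      (by
        refine ContinuousOn.sub (ContinuousOn.sub ((hUc n).mono (Icc_subset_Icc_right ht.2)) ?_) ?_
        <;> fun_prop)
      (by simp [hU0])
      (fun s hs => ((hUd n s (hsub s hs)).sub
        (((hasDerivAt_id s).sub_const p).const_mul L)).sub_const _)
      (fun s hs _ => by
        have := (abs_le.1 (hFb n s (Ioo_subset_Icc_self (hsub s hs)))).2
        linarith)
    linarith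
  have hlipU : ∀ n, ∀ s ∈ Ioo p q, ∀ t ∈ Ioo p q, |U n t - U n s| ≤ L * |t - s| := by
    intro n s hs t ht
    have := (convex_Ioo p q).norm_image_sub_le_of_norm_hasDerivWithin_le (f := U n) (C := L)
      (fun x hx => (hUd n x hx).hasDerivWithinAt)
      (fun x hx => hFb n x (Ioo_subset_Icc_self hx)) hs ht
    simpa [Real.norm_eq_abs] using this
  have hlip : ∀ s ∈ Ioo p q, ∀ t ∈ Ioo p q, |u t - u s| ≤ L * |t - s| := by
    intro s hs t ht
    exact le_of_tendsto' ((hlim t (Ioo_subset_Icc_self ht)).sub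
      (hlim s (Ioo_subset_Icc_self hs))).abs fun n => hlipU n s hs t ht
  have hucont : ContinuousOn u (Ioo p q) := by
    refine LipschitzOnWith.continuousOn (K := ⟨L, hL0.le⟩) (LipschitzOnWith.of_dist_le_mul ?_)
    intro t ht s hs
    rw [Real.dist_eq, Real.dist_eq]
    exact hlip s hs t ht
  have hupos : ∀ t ∈ Ioo p q, 0 < u t := fun t ht =>
    lt_of_lt_of_le (mul_pos hd (hA t ht)) (hlow t (Ioo_subset_Icc_self ht))
  set F : ℝ → ℝ := fun t => A t / u t - B t + C t * u t with hF
  have hFcont : ContinuousOn F (Ioo p q) :=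
    ((h.contA.continuous.continuousOn.div hucont fun t ht => (hupos t ht).ne').sub
      h.contB.continuousOn).add (h.contC.continuousOn.mul hucont)
  have hFint : ∀ s ∈ Ioo p q, ∀ t ∈ Ioo p q, u t - u s = ∫ y in s..t, F y := by
    intro s hs t ht
    have hsub : uIcc s t ⊆ Ioo p q := (ordConnected_Ioo).uIcc_subset hs ht
    have hUcont : ∀ n, ContinuousOn
        (fun t => (A t + e n) / U n t - B t + C t * min (U n t) (lam * T)) (uIcc s t) := by
      intro n
      have h1 : ContinuousOn (U n) (uIcc s t) := (hUc n).mono (hsub.trans Ioo_subset_Icc_self)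
      exact (((h.contA.continuous.continuousOn.add continuousOn_const).div h1
        fun y hy => (hUpos n y (Ioo_subset_Icc_self (hsub hy))).ne').sub
        h.contB.continuousOn).add (h.contC.continuousOn.mul (h1.inf continuousOn_const))
    have h1 : ∀ n, ∫ y in s..t, ((A y + e n) / U n y - B y + C y * min (U n y) (lam * T)) =
        U n t - U n s := fun n =>
      intervalIntegral.integral_eq_sub_of_hasDerivAt (fun y hy => hUd n y (hsub hy))
        (hUcont n).intervalIntegrable
    have h2 : Tendsto (fun n => ∫ y in s..t,
        ((A y + e n) / U n y - B y + C y * min (U n y) (lam * T))) atTop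
        (𝓝 (∫ y in s..t, F y)) := by
      refine intervalIntegral.tendsto_integral_filter_of_dominated_convergence (fun _ => L)
        (Eventually.of_forall fun n => ?_) (Eventually.of_forall fun n => ?_)
        intervalIntegrable_const ?_
      · exact ((hUcont n).mono uIoc_subset_uIcc).aestronglyMeasurable measurableSet_uIoc
      · exact Eventually.of_forall fun y hy =>
          hFb n y (Ioo_subset_Icc_self (hsub (uIoc_subset_uIcc hy)))
      · refine Eventually.of_forall fun y hy => ?_
        have hy' := hsub (uIoc_subset_uIcc hy)
        have hyI := Ioo_subset_Icc_self hy'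
        have hl := hlim y hyI
        -- the truncation is inactive in the limit, since an arch has length at most `T`
        have hmin : min (u y) (lam * T) = u y := by
          refine min_eq_left ((hupq y hyI).trans ?_)
          exact mul_le_mul_of_nonneg_left (by linarith [hy'.1]) hlam.le
        have h3 : Tendsto (fun n => (A y + e n) / U n y - B y + C y * min (U n y) (lam * T)) atTop
            (𝓝 ((A y + 0) / u y - B y + C y * min (u y) (lam * T))) :=
          (((helim.const_add _).div hl (hupos y hy').ne').sub_const _).add
            ((hl.min tendsto_const_nhds).const_mul _)
        rwa [hmin, add_zero] at h3
    refine tendsto_nhds_unique ((hlim t (Ioo_subset_Icc_self ht)).sub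
      (hlim s (Ioo_subset_Icc_self hs))) ?_
    simpa only [h1] using h2
  refine ⟨u, d, L, hd, hL0, fun t ht => ⟨?_, hlow t (Ioo_subset_Icc_self ht),
    hupq t (Ioo_subset_Icc_self ht), hupp t (Ioo_subset_Icc_self ht)⟩⟩
  obtain ⟨s, hs⟩ : (Ioo p q).Nonempty := ⟨t, ht⟩
  have hsub : uIcc s t ⊆ Ioo p q := (ordConnected_Ioo).uIcc_subset hs ht
  have hder : HasDerivAt (fun r => ∫ y in s..r, F y) (F t) t :=
    intervalIntegral.integral_hasDerivAt_right ((hFcont.mono hsub).intervalIntegrable)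
      (hFcont.stronglyMeasurableAtFilter isOpen_Ioo t ht)
      (hFcont.continuousAt (Ioo_mem_nhds ht.1 ht.2))
  refine (hder.const_add (u s)).congr_of_eventuallyEq ?_
  filter_upwards [Ioo_mem_nhds ht.1 ht.2] with r hr
  rw [← hFint s hs r hr]
  ring

/-! ### Logarithmic comparison -/

/-- If `v' ≤ -σ / (q - t)` whenever `v ≥ κ`, then `v` falls below `κ` before `q` and stays there,
because `1 / (q - t)` is not integrable at `q`. -/
lemma eventually_le_left_of_log {v v' : ℝ → ℝ} {r q σ κ : ℝ} (hrq : r < q) (hσ : 0 < σ)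
    (hd : ∀ t ∈ Ioo r q, HasDerivAt v (v' t) t)
    (hv : ∀ t ∈ Ioo r q, κ ≤ v t → v' t ≤ -σ / (q - t)) :
    ∀ᶠ t in 𝓝[<] q, v t ≤ κ := by
  have hex : ∃ s ∈ Ioo r q, v s ≤ κ := by
    by_contra! hcon
    have hg : ∀ t ∈ Ioo r q, HasDerivAt (fun t => v t - σ * Real.log (q - t))
        (v' t - σ * (-1 / (q - t))) t := fun t ht =>
      (hd t ht).sub ((((hasDerivAt_id t).const_sub q).log (sub_pos.2 ht.2).ne').const_mul σ)
    have hanti : AntitoneOn (fun t => v t - σ * Real.log (q - t)) (Ioo r q) := by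
      refine antitoneOn_of_deriv_nonpos (convex_Ioo r q)
        (fun t ht => (hg t ht).continuousAt.continuousWithinAt) ?_ ?_
      · rw [interior_Ioo]
        exact fun t ht => (hg t ht).differentiableAt.differentiableWithinAt
      · rw [interior_Ioo]
        intro t ht
        rw [(hg t ht).deriv]
        have := hv t ht (hcon t ht).le
        have e : σ * (-1 / (q - t)) = -σ / (q - t) := by ring
        linarith
    obtain ⟨s, hs⟩ := exists_between hrq
    have hlog : Tendsto (fun t => σ * Real.log (q - t)) (𝓝[<] q) atBot := by
      refine Tendsto.const_mul_atBot hσ (Real.tendsto_log_nhdsGT_zero.comp ?_)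
      refine tendsto_nhdsWithin_iff.2 ⟨?_, ?_⟩
      · have : Tendsto (fun t => q - t) (𝓝 q) (𝓝 (q - q)) := by
          exact (continuous_const.sub continuous_id).tendsto q
        rw [sub_self] at this
        exact this.mono_left nhdsWithin_le_nhds
      · filter_upwards [self_mem_nhdsWithin] with t ht
        exact mem_Ioi.2 (sub_pos.2 (mem_Iio.1 ht))
    have hev := hlog.eventually (eventually_lt_atBot (κ - (v s - σ * Real.log (q - s))))
    obtain ⟨t, ht1, ht2⟩ := (hev.and (Ioo_mem_nhdsLT hs.2)).exists
    have htI : t ∈ Ioo r q := ⟨hs.1.trans ht2.1, ht2.2⟩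
    have h1 := hanti hs htI ht2.1.le
    have h2 := hcon t htI
    simp only at h1
    linarith
  obtain ⟨s, hs, hsk⟩ := hex
  filter_upwards [Ioo_mem_nhdsLT hs.2] with t ht
  have hsub : ∀ y ∈ Icc s t, y ∈ Ioo r q := fun y hy =>
    ⟨hs.1.trans_le hy.1, hy.2.trans_lt ht.2⟩
  have := nonpos_of_barrier (g := fun y => v y - κ) (g' := v') ht.1.le
    (fun y hy => ((hd y (hsub y hy)).continuousAt.sub continuousAt_const).continuousWithinAt)
    (by simpa using hsk) (fun y hy => (hd y (hsub y (Ioo_subset_Icc_self hy))).sub_const κ)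
    (fun y hy hpos => by
      have hy' := hsub y (Ioo_subset_Icc_self hy)
      refine (hv y hy' (by linarith)).trans ?_
      exact div_nonpos_of_nonpos_of_nonneg (by linarith) (sub_pos.2 hy'.2).le)
  linarith

/-- The counterpart of `eventually_le_left_of_log` at a left end point: going backwards from a point
with `v > κ`, the function `v` would grow logarithmically, so a bounded `v` is at most `κ`. -/
lemma le_right_of_log {v v' : ℝ → ℝ} {p r σ κ V : ℝ} (hσ : 0 < σ)
    (hd : ∀ t ∈ Ioo p r, HasDerivAt v (v' t) t) (hV : ∀ t ∈ Ioo p r, v t ≤ V)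
    (hv : ∀ t ∈ Ioo p r, κ ≤ v t → v' t ≤ -σ / (t - p)) :
    ∀ t ∈ Ioo p r, v t ≤ κ := by
  intro t ht
  by_contra! hcon
  have hgt : ∀ s ∈ Ioo p t, κ < v s := by
    intro s hs
    by_contra! hle
    have hsub : ∀ y ∈ Icc s t, y ∈ Ioo p r := fun y hy =>
      ⟨hs.1.trans_le hy.1, hy.2.trans_lt ht.2⟩
    have := nonpos_of_barrier (g := fun y => v y - κ) (g' := v') hs.2.le
      (fun y hy => ((hd y (hsub y hy)).continuousAt.sub continuousAt_const).continuousWithinAt)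
      (by simpa using hle) (fun y hy => (hd y (hsub y (Ioo_subset_Icc_self hy))).sub_const κ)
      (fun y hy hpos => by
        have hy' := hsub y (Ioo_subset_Icc_self hy)
        refine (hv y hy' (by linarith)).trans ?_
        exact div_nonpos_of_nonpos_of_nonneg (by linarith) (sub_pos.2 hy'.1).le)
    linarith
  have hsub : ∀ y ∈ Ioo p t, y ∈ Ioo p r := fun y hy => ⟨hy.1, hy.2.trans ht.2⟩
  have hg : ∀ t ∈ Ioo p r, HasDerivAt (fun t => v t + σ * Real.log (t - p))
      (v' t + σ * (1 / (t - p))) t := fun t ht =>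
    (hd t ht).add ((((hasDerivAt_id t).sub_const p).log (sub_pos.2 ht.1).ne').const_mul σ)
  have hanti : AntitoneOn (fun t => v t + σ * Real.log (t - p)) (Ioo p t) := by
    refine antitoneOn_of_deriv_nonpos (convex_Ioo p t)
      (fun y hy => (hg y (hsub y hy)).continuousAt.continuousWithinAt) ?_ ?_
    · rw [interior_Ioo]
      exact fun y hy => (hg y (hsub y hy)).differentiableAt.differentiableWithinAt
    · rw [interior_Ioo]
      intro y hy
      rw [(hg y (hsub y hy)).deriv]
      have := hv y (hsub y hy) (hgt y hy).le
      have e : σ * (1 / (y - p)) = -(-σ / (y - p)) := by ring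
      linarith
  obtain ⟨s, hs⟩ := exists_between ht.1
  have hlog : Tendsto (fun t => σ * Real.log (t - p)) (𝓝[>] p) atBot := by
    refine Tendsto.const_mul_atBot hσ (Real.tendsto_log_nhdsGT_zero.comp ?_)
    refine tendsto_nhdsWithin_iff.2 ⟨?_, ?_⟩
    · have : Tendsto (fun t => t - p) (𝓝 p) (𝓝 (p - p)) := by
        exact (continuous_id.sub continuous_const).tendsto p
      rw [sub_self] at this
      exact this.mono_left nhdsWithin_le_nhds
    · filter_upwards [self_mem_nhdsWithin] with t ht
      exact mem_Ioi.2 (sub_pos.2 (mem_Ioi.1 ht))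
  have hev := hlog.eventually (eventually_lt_atBot (v s + σ * Real.log (s - p) - V))
  obtain ⟨y, hy1, hy2⟩ := (hev.and (Ioo_mem_nhdsGT hs.1)).exists
  have hyI : y ∈ Ioo p t := ⟨hy2.1, hy2.2.trans hs.2⟩
  have h1 := hanti hyI hs hy2.2.le
  have h2 := hV y (hsub y hyI)
  simp only at h1
  linarith

/-- Let `vm ≤ vp` be the roots of `A' z + B z * v - v ^ 2`. Along the filter `l`, the right-hand
side of the equation for `v = A / u` is, for `0 ≤ v ≤ V`, uniformly negative where `v ≥ vp + η` and
uniformly positive where `lo ≤ v ≤ vp - η`, as long as `lo > vm`. -/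
lemma quad_estimate {A' B C u : ℝ → ℝ} {z c vp vm V lo η : ℝ} {l : Filter ℝ}
    (hA' : Tendsto A' l (𝓝 (A' z))) (hB : Tendsto B l (𝓝 (B z))) (hC : ∀ t, |C t| ≤ c)
    (hu : Tendsto u l (𝓝 0)) (hsum : vm + vp = B z) (hprod : vm * vp = -A' z) (hle : vm ≤ vp)
    (hlo : vm < lo) (hη : 0 < η) :
    ∃ σ > 0, ∀ᶠ t in l, ∀ v, 0 ≤ v → v ≤ V →
      (vp + η ≤ v → A' t + B t * v - v ^ 2 - C t * u t * v ≤ -σ) ∧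
      (lo ≤ v → v ≤ vp - η → σ ≤ A' t + B t * v - v ^ 2 - C t * u t * v) := by
  set σ : ℝ := min (η * η) (η * (lo - vm)) / 2 with hσ
  have hσ0 : 0 < σ := by
    have h1 : 0 < η * η := by positivity
    have h2 : 0 < η * (lo - vm) := mul_pos hη (sub_pos.2 hlo)
    have := lt_min h1 h2
    positivity
  have hσ1 : 2 * σ ≤ η * η := by rw [hσ]; linarith [min_le_left (η * η) (η * (lo - vm))]
  have hσ2 : 2 * σ ≤ η * (lo - vm) := by rw [hσ]; linarith [min_le_right (η * η) (η * (lo - vm))]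
  have hrem : Tendsto (fun t => |A' t - A' z| + |B t - B z| * V + c * |u t| * V) l (𝓝 0) := by
    have h1 := (hA'.sub_const (A' z)).abs
    have h2 := ((hB.sub_const (B z)).abs).mul_const V
    have h3 := ((hu.abs).const_mul c).mul_const V
    simpa using (h1.add h2).add h3
  refine ⟨σ, hσ0, ?_⟩
  filter_upwards [hrem.eventually_lt_const hσ0] with t ht v hv0 hvV
  have hid : A' t + B t * v - v ^ 2 - C t * u t * v = (vp - v) * (v - vm) +
      ((A' t - A' z) + (B t - B z) * v - C t * u t * v) := by
    have h1 : B z = vm + vp := hsum.symm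
    have h2 : A' z = -(vm * vp) := by linarith
    rw [h1, h2]; ring
  have hr : |(A' t - A' z) + (B t - B z) * v - C t * u t * v| ≤
      |A' t - A' z| + |B t - B z| * V + c * |u t| * V := by
    have h1 : |(B t - B z) * v| ≤ |B t - B z| * V := by
      rw [abs_mul, abs_of_nonneg hv0]; gcongr
    have h2 : |C t * u t * v| ≤ c * |u t| * V := by
      rw [abs_mul, abs_mul, abs_of_nonneg hv0]
      have := hC t
      have : 0 ≤ c := (abs_nonneg _).trans this
      gcongr
    exact (abs_sub _ _).trans (add_le_add ((abs_add_le _ _).trans (add_le_add le_rfl h1)) h2)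
  have hr' := abs_le.1 (hr.trans ht.le)
  rw [hid]
  constructor
  · intro hv
    nlinarith
  · intro hv1 hv2
    nlinarith

/-! ### Solutions on a single arch -/

/-- The larger root of `v ^ 2 - B t * v - A' t`. At a zero of `A`, it is the limit of `-A / x` along
the solution. Under `Hyp` the discriminant is positive, so the square root is genuine. -/
noncomputable def root (A B : ℝ → ℝ) (t : ℝ) : ℝ :=
  (B t + √(B t ^ 2 + 4 * deriv A t)) / 2

/-- A solution on the open interval `(p, q)` whose sign is opposite to that of `A`, which tends to
`0` at both ends and whose derivative, written through the equation, tends there to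
`B - root A B`. -/
structure ArchSol (A B C : ℝ → ℝ) (p q : ℝ) (x : ℝ → ℝ) : Prop where
  sign : ∀ t ∈ Ioo p q, x t * A t < 0
  hasDeriv : ∀ t ∈ Ioo p q, HasDerivAt x (A t / x t + B t + C t * x t) t
  left : Tendsto x (𝓝[>] p) (𝓝 0)
  right : Tendsto x (𝓝[<] q) (𝓝 0)
  dleft : Tendsto (fun t => A t / x t + B t + C t * x t) (𝓝[>] p) (𝓝 (B p - root A B p))
  dright : Tendsto (fun t => A t / x t + B t + C t * x t) (𝓝[<] q) (𝓝 (B q - root A B q))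

namespace Hyp

/-- The number `lam` separates the two roots of `v ^ 2 - B t * v - A' t`. -/
lemma root_spec {T lam a c : ℝ} {A B C : ℝ → ℝ} (h : Hyp T A B C lam a c) (t : ℝ) :
    ∃ vm, vm + root A B t = B t ∧ vm * root A B t = -deriv A t ∧ vm < lam ∧ lam < root A B t := by
  have hlam := h.lam_pos
  have h0 : lam ^ 2 + a < B t * lam := by
    have h1 := h.ltB t
    have h2 : 0 ≤ lam * (c * T) := by
      have := h.c_nonneg
      have := h.T_pos
      positivity
    have h3 : lam + a / lam < B t := by linarith
    have h4 := mul_lt_mul_of_pos_right h3 hlam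
    have e : (lam + a / lam) * lam = lam ^ 2 + a := by field_simp
    linarith
  have h1 := h.dA t
  have hD : (B t - 2 * lam) ^ 2 < B t ^ 2 + 4 * deriv A t := by nlinarith
  have hD0 : 0 ≤ B t ^ 2 + 4 * deriv A t := (sq_nonneg _).trans hD.le
  have habs : |B t - 2 * lam| < √(B t ^ 2 + 4 * deriv A t) := by
    rw [← Real.sqrt_sq_eq_abs]
    exact Real.sqrt_lt_sqrt (sq_nonneg _) hD
  have habs := abs_lt.1 habs
  have hsq := Real.sq_sqrt hD0
  refine ⟨(B t - √(B t ^ 2 + 4 * deriv A t)) / 2, ?_, ?_, ?_, ?_⟩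
  · unfold root; ring
  · unfold root; linarith
  · linarith
  · unfold root; linarith

end Hyp

section limits
variable {T lam a c p q d L : ℝ} {A B C u : ℝ → ℝ}

/-- The equation satisfied by the ratio `v = A / u`. -/
lemma hasDerivAt_ratio (h : Hyp T A B C lam a c) {t : ℝ} (hu0 : 0 < u t)
    (hu : HasDerivAt u (A t / u t - B t + C t * u t) t) :
    HasDerivAt (fun t => A t / u t) ((deriv A t + B t * (A t / u t) - (A t / u t) ^ 2
      - C t * u t * (A t / u t)) / u t) t := by
  have := (h.hasDerivA t).div hu hu0.ne'
  refine this.congr_deriv ?_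
  have hu1 := hu0.ne'
  field_simp
  ring

lemma ratio_tendsto_left (h : Hyp T A B C lam a c) (hpq : p < q) (hAp : 0 < deriv A p)
    (hA : ∀ t ∈ Ioo p q, 0 < A t) (hd : 0 < d) (hL : 0 < L)
    (hu : ∀ t ∈ Ioo p q, HasDerivAt u (A t / u t - B t + C t * u t) t)
    (hlow : ∀ t ∈ Ioo p q, d * A t ≤ u t) (hupp : ∀ t ∈ Ioo p q, u t ≤ L * (t - p))
    (hu0 : Tendsto u (𝓝[>] p) (𝓝 0)) :
    Tendsto (fun t => A t / u t) (𝓝[>] p) (𝓝 (root A B p)) := by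
  obtain ⟨vm, hsum, hprod, h1, h2⟩ := h.root_spec p
  have hvp : 0 < root A B p := h.lam_pos.trans h2
  have hvm : vm < 0 := by
    by_contra! hcon
    have := mul_nonneg hcon hvp.le
    linarith
  have hupos : ∀ t ∈ Ioo p q, 0 < u t := fun t ht =>
    lt_of_lt_of_le (mul_pos hd (hA t ht)) (hlow t ht)
  have hv0 : ∀ t ∈ Ioo p q, 0 ≤ A t / u t := fun t ht => (div_pos (hA t ht) (hupos t ht)).le
  have hvV : ∀ t ∈ Ioo p q, A t / u t ≤ 1 / d := fun t ht => by
    rw [div_le_div_iff₀ (hupos t ht) hd]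
    linarith [hlow t ht]
  rw [Metric.tendsto_nhds]
  intro ε hε
  obtain ⟨σ, hσ, hev⟩ := quad_estimate (V := 1 / d) (lo := 0) (η := ε / 2) (l := 𝓝[>] p)
    (h.contdA.continuousAt.mono_left nhdsWithin_le_nhds)
    (h.contB.continuousAt.mono_left nhdsWithin_le_nhds) h.absC hu0 hsum hprod (h1.trans h2).le
    hvm (half_pos hε)
  obtain ⟨r₀, hr₀, hr⟩ := mem_nhdsGT_iff_exists_Ioo_subset.1 hev
  set r := min r₀ q with hrdef
  have hpr : p < r := lt_min hr₀ hpq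
  have hsub : ∀ t ∈ Ioo p r, t ∈ Ioo p q := fun t ht => ⟨ht.1, ht.2.trans_le (min_le_right _ _)⟩
  have hest := fun t (ht : t ∈ Ioo p r) =>
    hr ⟨ht.1, ht.2.trans_le (min_le_left _ _)⟩ (A t / u t) (hv0 t (hsub t ht)) (hvV t (hsub t ht))
  have hrate : ∀ t ∈ Ioo p r, σ / L / (t - p) ≤ σ / u t := by
    intro t ht
    rw [div_div]
    have := hupos t (hsub t ht)
    have := hupp t (hsub t ht)
    gcongr
  have hup := le_right_of_log (p := p) (r := r) (κ := root A B p + ε / 2) (V := 1 / d)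
    (div_pos hσ hL) (fun t ht => hasDerivAt_ratio h (hupos t (hsub t ht)) (hu t (hsub t ht)))
    (fun t ht => hvV t (hsub t ht))
    (fun t ht hk => by
      have h3 := (hest t ht).1 hk
      have h4 := hrate t ht
      have h5 := div_le_div_of_nonneg_right h3 (hupos t (hsub t ht)).le
      rw [neg_div] at h5 ⊢
      linarith)
  have hdown := le_right_of_log (p := p) (r := r) (κ := -(root A B p - ε / 2)) (V := 0)
    (div_pos hσ hL) (fun t ht => (hasDerivAt_ratio h (hupos t (hsub t ht)) (hu t (hsub t ht))).neg)
    (fun t ht => neg_nonpos.2 (hv0 t (hsub t ht)))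
    (fun t ht hk => by
      have h3 := (hest t ht).2 (hv0 t (hsub t ht)) (neg_le_neg_iff.1 hk)
      have h4 := hrate t ht
      have h5 := div_le_div_of_nonneg_right h3 (hupos t (hsub t ht)).le
      rw [neg_div]
      linarith)
  filter_upwards [Ioo_mem_nhdsGT hpr] with t ht
  have h3 := hup t ht
  have h4 := hdown t ht
  simp only [Pi.neg_apply] at h4
  rw [Real.dist_eq, abs_lt]
  constructor <;> linarith

lemma ratio_tendsto_right (h : Hyp T A B C lam a c) (hpq : p < q) (hq : A q = 0)
    (hAq : deriv A q < 0)
    (hA : ∀ t ∈ Ioo p q, 0 < A t) (hd : 0 < d)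
    (hu : ∀ t ∈ Ioo p q, HasDerivAt u (A t / u t - B t + C t * u t) t)
    (hlow : ∀ t ∈ Ioo p q, d * A t ≤ u t) (hupp : ∀ t ∈ Ioo p q, u t ≤ lam * (q - t))
    (hu0 : Tendsto u (𝓝[<] q) (𝓝 0)) :
    Tendsto (fun t => A t / u t) (𝓝[<] q) (𝓝 (root A B q)) := by
  obtain ⟨vm, hsum, hprod, h1, h2⟩ := h.root_spec q
  have hlam := h.lam_pos
  have hvp : 0 < root A B q := hlam.trans h2
  have hvm : 0 < vm := by
    by_contra! hcon
    have := mul_nonpos_of_nonpos_of_nonneg hcon hvp.le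
    linarith
  have hupos : ∀ t ∈ Ioo p q, 0 < u t := fun t ht =>
    lt_of_lt_of_le (mul_pos hd (hA t ht)) (hlow t ht)
  have hv0 : ∀ t ∈ Ioo p q, 0 ≤ A t / u t := fun t ht => (div_pos (hA t ht) (hupos t ht)).le
  have hvV : ∀ t ∈ Ioo p q, A t / u t ≤ 1 / d := fun t ht => by
    rw [div_le_div_iff₀ (hupos t ht) hd]
    linarith [hlow t ht]
  -- the product of the roots is `-A'(q)`, so `-A'(q) / lam` exceeds the small root `vm`
  have hgap : vm < -deriv A q / lam := by
    rw [lt_div_iff₀ hlam, ← hprod]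
    exact mul_lt_mul_of_pos_left h2 hvm
  obtain ⟨lo, hlo1, hlo2⟩ := exists_between hgap
  -- since `u ≤ lam * (q - t)`, the ratio is at least about `-deriv A q / lam`
  have hloev : ∀ᶠ t in 𝓝[<] q, lo ≤ A t / u t := by
    have hs : Tendsto (fun t => -(slope A q t) / lam) (𝓝[<] q) (𝓝 (-deriv A q / lam)) :=
      (((hasDerivAt_iff_tendsto_slope.1 (h.hasDerivA q)).mono_left
        (nhdsWithin_mono _ (fun t ht => (mem_Iio.1 ht).ne))).neg).div_const lam
    filter_upwards [hs.eventually_const_lt hlo2, Ioo_mem_nhdsLT hpq] with t ht htI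
    refine ht.le.trans ?_
    have h3 : 0 < q - t := sub_pos.2 htI.2
    have h4 : -(slope A q t) / lam = A t / (lam * (q - t)) := by
      rw [slope_def_field, hq]
      have : t - q ≠ 0 := by linarith
      field_simp
      ring
    rw [h4]
    have := (hA t htI).le
    have := hupos t htI
    have := hupp t htI
    gcongr
  rw [Metric.tendsto_nhds]
  intro ε hε
  obtain ⟨σ, hσ, hev⟩ := quad_estimate (V := 1 / d) (lo := lo) (η := ε / 2) (l := 𝓝[<] q)
    (h.contdA.continuousAt.mono_left nhdsWithin_le_nhds)
    (h.contB.continuousAt.mono_left nhdsWithin_le_nhds) h.absC hu0 hsum hprod (h1.trans h2).le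
    hlo1 (half_pos hε)
  obtain ⟨r₀, hr₀, hr⟩ := mem_nhdsLT_iff_exists_Ioo_subset.1 (hev.and hloev)
  set r := max r₀ p with hrdef
  have hrq : r < q := max_lt hr₀ hpq
  have hsub : ∀ t ∈ Ioo r q, t ∈ Ioo p q :=
    fun t ht => ⟨(le_max_right _ _).trans_lt ht.1, ht.2⟩
  have hsub' : ∀ t ∈ Ioo r q, t ∈ Ioo r₀ q :=
    fun t ht => ⟨(le_max_left _ _).trans_lt ht.1, ht.2⟩
  have hest := fun t (ht : t ∈ Ioo r q) =>
    (hr (hsub' t ht)).1 (A t / u t) (hv0 t (hsub t ht)) (hvV t (hsub t ht))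
  have hrate : ∀ t ∈ Ioo r q, σ / lam / (q - t) ≤ σ / u t := by
    intro t ht
    rw [div_div]
    have := hupos t (hsub t ht)
    have := hupp t (hsub t ht)
    gcongr
  have hup := eventually_le_left_of_log (r := r) (q := q) (κ := root A B q + ε / 2) hrq
    (div_pos hσ hlam) (fun t ht => hasDerivAt_ratio h (hupos t (hsub t ht)) (hu t (hsub t ht)))
    (fun t ht hk => by
      have h3 := (hest t ht).1 hk
      have h4 := hrate t ht
      have h5 := div_le_div_of_nonneg_right h3 (hupos t (hsub t ht)).le
      rw [neg_div] at h5 ⊢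
      linarith)
  have hdown := eventually_le_left_of_log (r := r) (q := q) (κ := -(root A B q - ε / 2)) hrq
    (div_pos hσ hlam)
    (fun t ht => (hasDerivAt_ratio h (hupos t (hsub t ht)) (hu t (hsub t ht))).neg)
    (fun t ht hk => by
      have h3 := (hest t ht).2 (hr (hsub' t ht)).2 (neg_le_neg_iff.1 hk)
      have h4 := hrate t ht
      have h5 := div_le_div_of_nonneg_right h3 (hupos t (hsub t ht)).le
      rw [neg_div]
      linarith)
  filter_upwards [hup, hdown] with t h3 h4
  simp only [Pi.neg_apply] at h4
  rw [Real.dist_eq, abs_lt]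
  constructor <;> linarith

end limits

lemma exists_archSol_of_pos {T lam a c p q : ℝ} {A B C : ℝ → ℝ} (h : Hyp T A B C lam a c)
    (hpq : p < q) (hlen : q - p ≤ T) (hp : A p = 0) (hq : A q = 0)
    (hA : ∀ t ∈ Ioo p q, 0 < A t) : ∃ x, ArchSol A B C p q x := by
  obtain ⟨u, d, L, hd, hL, hu⟩ := exists_arch_sol h hpq hlen hp hq hA
  have hupos : ∀ t ∈ Ioo p q, 0 < u t := fun t ht =>
    lt_of_lt_of_le (mul_pos hd (hA t ht)) (hu t ht).2.1
  have hAp : 0 < deriv A p := by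
    refine lt_of_le_of_ne ?_ (h.simple p hp).symm
    refine ge_of_tendsto ((hasDerivAt_iff_tendsto_slope.1 (h.hasDerivA p)).mono_left
        (nhdsWithin_mono _ (fun t (ht : t ∈ Ioi p) => (mem_Ioi.1 ht).ne'))) ?_
    filter_upwards [Ioo_mem_nhdsGT hpq] with t ht
    rw [slope_def_field, hp, sub_zero]
    exact div_nonneg (hA t ht).le (sub_pos.2 ht.1).le
  have hAq : deriv A q < 0 := by
    refine lt_of_le_of_ne ?_ (h.simple q hq)
    refine le_of_tendsto ((hasDerivAt_iff_tendsto_slope.1 (h.hasDerivA q)).mono_left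
        (nhdsWithin_mono _ (fun t (ht : t ∈ Iio q) => (mem_Iio.1 ht).ne))) ?_
    filter_upwards [Ioo_mem_nhdsLT hpq] with t ht
    rw [slope_def_field, hq, sub_zero]
    exact div_nonpos_of_nonneg_of_nonpos (hA t ht).le (sub_neg.2 ht.2).le
  have hup : Tendsto u (𝓝[>] p) (𝓝 0) := by
    have h1 : Tendsto (fun t => L * (t - p)) (𝓝[>] p) (𝓝 0) := by
      have : Tendsto (fun t => L * (t - p)) (𝓝 p) (𝓝 (L * (p - p))) :=
        (by fun_prop : Continuous fun t : ℝ => L * (t - p)).tendsto p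
      rw [sub_self, mul_zero] at this
      exact this.mono_left nhdsWithin_le_nhds
    refine tendsto_of_tendsto_of_tendsto_of_le_of_le' tendsto_const_nhds h1 ?_ ?_
    · filter_upwards [Ioo_mem_nhdsGT hpq] with t ht using (hupos t ht).le
    · filter_upwards [Ioo_mem_nhdsGT hpq] with t ht using (hu t ht).2.2.2
  have huq : Tendsto u (𝓝[<] q) (𝓝 0) := by
    have h1 : Tendsto (fun t => lam * (q - t)) (𝓝[<] q) (𝓝 0) := by
      have : Tendsto (fun t => lam * (q - t)) (𝓝 q) (𝓝 (lam * (q - q))) :=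
        (by fun_prop : Continuous fun t : ℝ => lam * (q - t)).tendsto q
      rw [sub_self, mul_zero] at this
      exact this.mono_left nhdsWithin_le_nhds
    refine tendsto_of_tendsto_of_tendsto_of_le_of_le' tendsto_const_nhds h1 ?_ ?_
    · filter_upwards [Ioo_mem_nhdsLT hpq] with t ht using (hupos t ht).le
    · filter_upwards [Ioo_mem_nhdsLT hpq] with t ht using (hu t ht).2.2.1
  have hrp := ratio_tendsto_left h hpq hAp hA hd hL (fun t ht => (hu t ht).1)
    (fun t ht => (hu t ht).2.1) (fun t ht => (hu t ht).2.2.2) hup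
  have hrq := ratio_tendsto_right h hpq hq hAq hA hd (fun t ht => (hu t ht).1)
    (fun t ht => (hu t ht).2.1) (fun t ht => (hu t ht).2.2.1) huq
  have key : ∀ (z : ℝ) (l : Filter ℝ), l ≤ 𝓝 z → Tendsto u l (𝓝 0) →
      Tendsto (fun t => A t / u t) l (𝓝 (root A B z)) →
      Tendsto (fun t => A t / (-u t) + B t + C t * (-u t)) l (𝓝 (B z - root A B z)) := by
    intro z l hl h1 h2
    have h3 : Tendsto B l (𝓝 (B z)) := h.contB.continuousAt.mono_left hl
    have h4 : Tendsto C l (𝓝 (C z)) := h.contC.continuousAt.mono_left hl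
    have h5 := (h2.neg.add h3).add (h4.mul h1.neg)
    simp only [div_neg]
    convert h5 using 2
    ring
  refine ⟨fun t => -u t, ⟨fun t ht => ?_, fun t ht => ?_, ?_, ?_, ?_, ?_⟩⟩
  · have := mul_pos (hupos t ht) (hA t ht)
    linarith
  · refine (hu t ht).1.neg.congr_deriv ?_
    rw [div_neg]
    ring
  · simpa using hup.neg
  · simpa using huq.neg
  · exact key p _ nhdsWithin_le_nhds hup hrp
  · exact key q _ nhdsWithin_le_nhds huq hrq

/-! ### Time reversal -/

/-- The time reversal `t ↦ -f (-t)`. It maps solutions for `A, B, C` to solutions for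
`rev A, B (-·), rev C`. -/
def rev (f : ℝ → ℝ) : ℝ → ℝ := fun t => -f (-t)

lemma deriv_rev (f : ℝ → ℝ) (t : ℝ) : deriv (rev f) t = deriv f (-t) := by
  have : rev f = fun t => -(fun s => f (-s)) t := rfl
  rw [this, deriv.fun_neg, deriv_comp_neg, neg_neg]

lemma Hyp.rev {T lam a c : ℝ} {A B C : ℝ → ℝ} (h : Hyp T A B C lam a c) :
    Hyp T (rev A) (fun t => B (-t)) (Abel.rev C) lam a c where
  T_pos := h.T_pos
  contA := (h.contA.comp contDiff_neg).neg
  contB := h.contB.comp continuous_neg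
  contC := (h.contC.comp continuous_neg).neg
  perA t := by simp only [Abel.rev, neg_add, ← sub_eq_add_neg, h.perA.sub_eq]
  perB t := by simp only [neg_add, ← sub_eq_add_neg, h.perB.sub_eq]
  perC t := by simp only [Abel.rev, neg_add, ← sub_eq_add_neg, h.perC.sub_eq]
  zero := by
    obtain ⟨t, ht⟩ := h.zero
    exact ⟨-t, by simp [Abel.rev, ht]⟩
  simple t ht := by
    rw [deriv_rev]
    exact h.simple _ (by simpa [Abel.rev] using ht)
  lam_pos := h.lam_pos
  a_pos := h.a_pos
  c_nonneg := h.c_nonneg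
  dA t := by rw [deriv_rev]; exact h.dA _
  absC t := by simpa [Abel.rev] using h.absC (-t)
  ltB t := h.ltB _

lemma ArchSol.rev {p q : ℝ} {A B C y : ℝ → ℝ}
    (hy : ArchSol (rev A) (fun t => B (-t)) (Abel.rev C) (-q) (-p) y) :
    ArchSol A B C p q (Abel.rev y) := by
  have hmem : ∀ t ∈ Ioo p q, -t ∈ Ioo (-q) (-p) := fun t ht => ⟨neg_lt_neg ht.2, neg_lt_neg ht.1⟩
  have hp : Tendsto (fun t : ℝ => -t) (𝓝[>] p) (𝓝[<] (-p)) := tendsto_neg_nhdsGT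
  have hq : Tendsto (fun t : ℝ => -t) (𝓝[<] q) (𝓝[>] (-q)) := tendsto_neg_nhdsLT
  have hroot : ∀ t, root (Abel.rev A) (fun t => B (-t)) (-t) = root A B t := by
    intro t
    simp [root, deriv_rev]
  have hfun : ∀ t, A t / Abel.rev y t + B t + C t * Abel.rev y t =
      Abel.rev A (-t) / y (-t) + B (- -t) + Abel.rev C (-t) * y (-t) := by
    intro t
    simp only [Abel.rev, neg_neg, div_neg, neg_div, mul_neg, neg_mul]
  refine ⟨fun t ht => ?_, fun t ht => ?_, ?_, ?_, ?_, ?_⟩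
  · have := hy.sign (-t) (hmem t ht)
    simp only [Abel.rev, neg_neg] at this ⊢
    linarith
  · have h1 := hy.hasDeriv (-t) (hmem t ht)
    have h2 := (h1.comp t (hasDerivAt_neg t)).neg
    rw [hfun]
    exact h2.congr_deriv (by ring)
  · simpa [Abel.rev] using! (hy.right.comp hp).neg
  · simpa [Abel.rev] using! (hy.left.comp hq).neg
  · have := hy.dright.comp hp
    rw [hroot, neg_neg] at this
    exact this.congr fun t => (hfun t).symm
  · have := hy.dleft.comp hq
    rw [hroot, neg_neg] at this
    exact this.congr fun t => (hfun t).symm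

lemma sign_const {A : ℝ → ℝ} {p q : ℝ} (hA : ContinuousOn A (Ioo p q))
    (h0 : ∀ t ∈ Ioo p q, A t ≠ 0) :
    (∀ t ∈ Ioo p q, 0 < A t) ∨ (∀ t ∈ Ioo p q, A t < 0) := by
  by_contra! hcon
  obtain ⟨⟨s, hs, hs'⟩, t, ht, ht'⟩ := hcon
  obtain ⟨y, hy, hy0⟩ := isPreconnected_Ioo.intermediate_value hs ht hA ⟨hs', ht'⟩
  exact h0 y hy hy0

lemma exists_archSol {T lam a c p q : ℝ} {A B C : ℝ → ℝ} (h : Hyp T A B C lam a c)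
    (hpq : p < q) (hlen : q - p ≤ T) (hp : A p = 0) (hq : A q = 0)
    (hA : ∀ t ∈ Ioo p q, A t ≠ 0) : ∃ x, ArchSol A B C p q x := by
  rcases sign_const h.contA.continuous.continuousOn hA with hs | hs
  · exact exists_archSol_of_pos h hpq hlen hp hq hs
  · obtain ⟨y, hy⟩ := exists_archSol_of_pos h.rev (neg_lt_neg hpq) (by linarith)
      (by simp [rev, hq]) (by simp [rev, hp]) (fun t ht => by
        have := hs (-t) ⟨by linarith [ht.2], by linarith [ht.1]⟩
        simpa [rev] using this)
    exact ⟨rev y, hy.rev⟩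

/-! ### Gluing over the arches of `A` -/

/-- The interval `(p, q)` lies between two consecutive zeros of `A`, and its length is at most `T`. -/
structure Arch (A : ℝ → ℝ) (T p q : ℝ) : Prop where
  lt : p < q
  len : q - p ≤ T
  left : A p = 0
  right : A q = 0
  ne : ∀ t ∈ Ioo p q, A t ≠ 0

lemma Arch.eq {A : ℝ → ℝ} {T T' p q p' q' t : ℝ} (h : Arch A T p q) (h' : Arch A T' p' q')
    (ht : t ∈ Ioo p q) (ht' : t ∈ Ioo p' q') : p' = p ∧ q' = q := by
  constructor
  · apply le_antisymm
    · by_contra! hlt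
      exact h.ne p' ⟨hlt, ht'.1.trans ht.2⟩ h'.left
    · by_contra! hlt
      exact h'.ne p ⟨hlt, ht.1.trans ht'.2⟩ h.left
  · apply le_antisymm
    · by_contra! hlt
      exact h'.ne q ⟨ht'.1.trans ht.2, hlt⟩ h.right
    · by_contra! hlt
      exact h.ne q' ⟨ht.1.trans ht'.2, hlt⟩ h'.right

section
variable {T lam a c : ℝ} {A B C : ℝ → ℝ}

lemma exists_arch (h : Hyp T A B C lam a c) {t : ℝ} (ht : A t ≠ 0) :
    ∃ p q, Arch A T p q ∧ t ∈ Ioo p q := by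
  have hT := h.T_pos
  obtain ⟨z, hz⟩ := h.zero
  have hcl : IsClosed (A ⁻¹' {0}) := isClosed_singleton.preimage h.contA.continuous
  obtain ⟨y, hy, hyz⟩ := h.perA.exists_mem_Ico hT z t
  obtain ⟨y', hy', hyz'⟩ := h.perA.exists_mem_Ico hT z (t - T)
  obtain ⟨q, ⟨hq, hq0⟩, hqmin⟩ := (isCompact_Icc.inter_right hcl).exists_isLeast
    (s := Icc t (t + T) ∩ A ⁻¹' {0}) ⟨y, Ico_subset_Icc_self hy, by simp [← hyz, hz]⟩
  obtain ⟨p, ⟨hp, hp0⟩, hpmax⟩ := (isCompact_Icc.inter_right hcl).exists_isGreatest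
    (s := Icc (t - T) t ∩ A ⁻¹' {0}) ⟨y', ⟨hy'.1, by linarith [hy'.2]⟩, by simp [← hyz', hz]⟩
  have hp0' : A p = 0 := hp0
  have hq0' : A q = 0 := hq0
  have hpt : p < t := lt_of_le_of_ne hp.2 (by rintro rfl; exact ht hp0)
  have htq : t < q := lt_of_le_of_ne hq.1 (by rintro rfl; exact ht hq0)
  have hlen : q ≤ p + T := hqmin ⟨⟨by linarith [hp.1], by linarith⟩, by
    rw [mem_preimage, h.perA p]; exact hp0⟩
  refine ⟨p, q, ⟨hpt.trans htq, by linarith, hp0, hq0, fun s hs hs0 => ?_⟩, hpt, htq⟩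
  rcases le_total s t with hst | hst
  · have := hpmax ⟨⟨by linarith [hp.1, hs.1], hst⟩, hs0⟩
    linarith [hs.1]
  · have := hqmin ⟨⟨hst, by linarith [hq.2, hs.2]⟩, hs0⟩
    linarith [hs.2]

lemma exists_arch_right (h : Hyp T A B C lam a c) {z : ℝ} (hz : A z = 0) : ∃ q, Arch A T z q := by
  have hne : ∀ᶠ t in 𝓝[>] z, A t ≠ 0 := by
    have := (h.hasDerivA z).eventually_ne (c := 0) (h.simple z hz)
    exact this.filter_mono (nhdsWithin_mono _ fun t (ht : t ∈ Ioi z) => (mem_Ioi.1 ht).ne')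
  obtain ⟨r, hr, hr'⟩ := mem_nhdsGT_iff_exists_Ioo_subset.1 hne
  obtain ⟨t, ht⟩ := exists_between (mem_Ioi.1 hr)
  obtain ⟨p, q, hpq, htpq⟩ := exists_arch h (hr' ht)
  have h1 : z ≤ p := by
    by_contra! hlt
    exact hpq.ne z ⟨hlt, ht.1.trans htpq.2⟩ hz
  have h2 : p ≤ z := by
    by_contra! hlt
    exact hr' ⟨hlt, htpq.1.trans ht.2⟩ hpq.left
  obtain rfl := le_antisymm h1 h2
  exact ⟨q, hpq⟩

lemma exists_arch_left (h : Hyp T A B C lam a c) {z : ℝ} (hz : A z = 0) : ∃ p, Arch A T p z := by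
  have hne : ∀ᶠ t in 𝓝[<] z, A t ≠ 0 := by
    have := (h.hasDerivA z).eventually_ne (c := 0) (h.simple z hz)
    exact this.filter_mono (nhdsWithin_mono _ fun t (ht : t ∈ Iio z) => (mem_Iio.1 ht).ne)
  obtain ⟨r, hr, hr'⟩ := mem_nhdsLT_iff_exists_Ioo_subset.1 hne
  obtain ⟨t, ht⟩ := exists_between (mem_Iio.1 hr)
  obtain ⟨p, q, hpq, htpq⟩ := exists_arch h (hr' ht)
  have h1 : q ≤ z := by
    by_contra! hlt
    exact hpq.ne z ⟨htpq.1.trans ht.2, hlt⟩ hz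
  have h2 : z ≤ q := by
    by_contra! hlt
    exact hr' ⟨ht.1.trans htpq.2, hlt⟩ hpq.right
  obtain rfl := le_antisymm h1 h2
  exact ⟨p, hpq⟩

lemma ArchSol.congr {p q : ℝ} {x y : ℝ → ℝ} (hpq : p < q) (hx : ArchSol A B C p q x)
    (hxy : ∀ t ∈ Ioo p q, y t = x t) : ArchSol A B C p q y := by
  have hev : ∀ t ∈ Ioo p q, y =ᶠ[𝓝 t] x := fun t ht => by
    filter_upwards [Ioo_mem_nhds ht.1 ht.2] with s hs using hxy s hs
  have hp : x =ᶠ[𝓝[>] p] y := by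
    filter_upwards [Ioo_mem_nhdsGT hpq] with s hs using (hxy s hs).symm
  have hq : x =ᶠ[𝓝[<] q] y := by
    filter_upwards [Ioo_mem_nhdsLT hpq] with s hs using (hxy s hs).symm
  refine ⟨fun t ht => ?_, fun t ht => ?_, hx.left.congr' hp, hx.right.congr' hq,
    hx.dleft.congr' ?_, hx.dright.congr' ?_⟩
  · rw [hxy t ht]; exact hx.sign t ht
  · rw [hxy t ht]; exact (hx.hasDeriv t ht).congr_of_eventuallyEq (hev t ht)
  · filter_upwards [hp] with s hs; rw [hs]
  · filter_upwards [hq] with s hs; rw [hs]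

/-- Solutions chosen on each arch, extended by `0` at the zeros of `A`, form a single function. -/
lemma exists_glued (h : Hyp T A B C lam a c) :
    ∃ x : ℝ → ℝ, (∀ t, A t = 0 → x t = 0) ∧ ∀ p q, Arch A T p q → ArchSol A B C p q x := by
  classical
  have hX : ∀ p q, ∃ x, Arch A T p q → ArchSol A B C p q x := by
    intro p q
    by_cases hpq : Arch A T p q
    · obtain ⟨x, hx⟩ := exists_archSol h hpq.lt hpq.len hpq.left hpq.right hpq.ne
      exact ⟨x, fun _ => hx⟩
    · exact ⟨0, fun hh => absurd hh hpq⟩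
  choose X hX using hX
  have hPQ : ∀ t, ∃ p q, A t ≠ 0 → Arch A T p q ∧ t ∈ Ioo p q := by
    intro t
    by_cases ht : A t = 0
    · exact ⟨0, 0, fun hh => absurd ht hh⟩
    · obtain ⟨p, q, hpq⟩ := exists_arch h ht
      exact ⟨p, q, fun _ => hpq⟩
  choose P Q hPQ using hPQ
  refine ⟨fun t => if A t = 0 then 0 else X (P t) (Q t) t, fun t ht => by simp [ht], ?_⟩
  intro p q hpq
  refine (hX p q hpq).congr hpq.lt fun t ht => ?_
  have hne := hpq.ne t ht
  obtain ⟨h1, h2⟩ := hPQ t hne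
  obtain ⟨e1, e2⟩ := hpq.eq h1 ht h2
  simp only [if_neg hne, e1, e2]

lemma exists_sol (h : Hyp T A B C lam a c) :
    ∃ x : ℝ → ℝ, ContDiff ℝ 1 x ∧ (∀ t, x t * deriv x t = A t + B t * x t + C t * x t ^ 2) ∧
      (∀ t, A t = 0 → x t = 0) ∧ (∀ t, A t ≠ 0 → x t ≠ 0) := by
  obtain ⟨x, hx0, hx⟩ := exists_glued h
  have hxne : ∀ t, A t ≠ 0 → x t ≠ 0 := by
    intro t ht hxt
    obtain ⟨p, q, hpq, htI⟩ := exists_arch h ht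
    have := (hx p q hpq).sign t htI
    rw [hxt, zero_mul] at this
    exact lt_irrefl _ this
  have hder : ∀ t, A t ≠ 0 → HasDerivAt x (A t / x t + B t + C t * x t) t := by
    intro t ht
    obtain ⟨p, q, hpq, htI⟩ := exists_arch h ht
    exact (hx p q hpq).hasDeriv t htI
  have hdr : ∀ z, A z = 0 → Tendsto (deriv x) (𝓝[>] z) (𝓝 (B z - root A B z)) := by
    intro z hz
    obtain ⟨q, hq⟩ := exists_arch_right h hz
    refine (hx z q hq).dleft.congr' ?_
    filter_upwards [Ioo_mem_nhdsGT hq.lt] with t ht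
    exact (hder t (hq.ne t ht)).deriv.symm
  have hdl : ∀ z, A z = 0 → Tendsto (deriv x) (𝓝[<] z) (𝓝 (B z - root A B z)) := by
    intro z hz
    obtain ⟨p, hp⟩ := exists_arch_left h hz
    refine (hx p z hp).dright.congr' ?_
    filter_upwards [Ioo_mem_nhdsLT hp.lt] with t ht
    exact (hder t (hp.ne t ht)).deriv.symm
  have hder0 : ∀ z, A z = 0 → HasDerivAt x (B z - root A B z) z := by
    intro z hz
    obtain ⟨q, hq⟩ := exists_arch_right h hz
    obtain ⟨p, hp⟩ := exists_arch_left h hz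
    have h1 : HasDerivWithinAt x (B z - root A B z) (Ici z) z := by
      refine hasDerivWithinAt_Ici_of_tendsto_deriv (s := Ioo z q)
        (fun t ht => (hder t (hq.ne t ht)).differentiableAt.differentiableWithinAt) ?_
        (Ioo_mem_nhdsGT hq.lt) (hdr z hz)
      have := (hx z q hq).left
      rw [← hx0 z hz] at this
      exact this.mono_left (nhdsWithin_mono _ fun t ht => ht.1)
    have h2 : HasDerivWithinAt x (B z - root A B z) (Iic z) z := by
      refine hasDerivWithinAt_Iic_of_tendsto_deriv (s := Ioo p z)
        (fun t ht => (hder t (hp.ne t ht)).differentiableAt.differentiableWithinAt) ?_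
        (Ioo_mem_nhdsLT hp.lt) (hdl z hz)
      have := (hx p z hp).right
      rw [← hx0 z hz] at this
      exact this.mono_left (nhdsWithin_mono _ fun t ht => ht.2)
    have := h2.union h1
    rwa [Iic_union_Ici, hasDerivWithinAt_univ] at this
  have hdiff : Differentiable ℝ x := by
    intro t
    by_cases ht : A t = 0
    · exact (hder0 t ht).differentiableAt
    · exact (hder t ht).differentiableAt
  refine ⟨x, contDiff_one_iff_deriv.2 ⟨hdiff, continuous_iff_continuousAt.2 fun t => ?_⟩,
    fun t => ?_, hx0, hxne⟩
  · by_cases ht : A t = 0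
    · have hd0 := (hder0 t ht).deriv
      refine continuousAt_iff_continuous_left'_right'.2 ⟨?_, ?_⟩
      · have := hdl t ht
        rwa [← hd0] at this
      · have := hdr t ht
        rwa [← hd0] at this
    · have hev : (fun t => A t / x t + B t + C t * x t) =ᶠ[𝓝 t] deriv x := by
        filter_upwards [h.contA.continuous.continuousAt.eventually_ne ht] with s hs
        exact (hder s hs).deriv.symm
      refine ContinuousAt.congr ?_ hev
      exact ((h.contA.continuous.continuousAt.div (hdiff t).continuousAt (hxne t ht)).add
        h.contB.continuousAt).add (h.contC.continuousAt.mul (hdiff t).continuousAt)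
  · by_cases ht : A t = 0
    · simp [hx0 t ht, ht]
    · rw [(hder t ht).deriv]
      have := hxne t ht
      field_simp

/-! ### Uniqueness -/

/-- A differentiable solution of `x x' = A + B x + C x ^ 2` on the whole line. -/
structure IsSol (A B C x : ℝ → ℝ) : Prop where
  diff : Differentiable ℝ x
  eq : ∀ t, x t * deriv x t = A t + B t * x t + C t * x t ^ 2

lemma IsSol.rev {x : ℝ → ℝ} (hx : IsSol A B C x) :
    IsSol (rev A) (fun t => B (-t)) (Abel.rev C) (Abel.rev x) where
  diff := (hx.diff.comp differentiable_neg).neg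
  eq t := by
    have := hx.eq (-t)
    rw [deriv_rev]
    simp only [Abel.rev]
    linarith

lemma IsSol.hasDerivAt {x : ℝ → ℝ} (hx : IsSol A B C x) {t : ℝ} (ht : x t ≠ 0) :
    HasDerivAt x (A t / x t + B t + C t * x t) t := by
  refine (hx.diff t).hasDerivAt.congr_deriv ?_
  have := hx.eq t
  field_simp
  linarith

/-- If a solution were positive on an arch with `A > 0`, then `x ^ 2` would increase up to the right
end, where `x` vanishes. -/
lemma IsSol.neg_of_arch (h : Hyp T A B C lam a c) {x : ℝ → ℝ} (hx : IsSol A B C x) {p q : ℝ}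
    (hpq : p < q) (hA : ∀ t ∈ Ioo p q, 0 < A t) (hq : x q = 0) : ∀ t ∈ Ioo p q, x t < 0 := by
  have hne : ∀ t ∈ Ioo p q, x t ≠ 0 := by
    intro t ht h0
    have := hx.eq t
    rw [h0] at this
    have := hA t ht
    linarith
  rcases sign_const hx.diff.continuous.continuousOn hne with hs | hs
  · exfalso
    have hcont : Continuous fun t => B t + C t * x t :=
      h.contB.add (h.contC.mul hx.diff.continuous)
    have hev : ∀ᶠ t in 𝓝[<] q, 0 < B t + C t * x t := by
      refine (hcont.continuousAt.eventually_const_lt ?_).filter_mono nhdsWithin_le_nhds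
      simpa [hq] using h.B_pos q
    obtain ⟨r, hr, hr'⟩ := mem_nhdsLT_iff_exists_Ioo_subset.1 hev
    obtain ⟨s, hs1, hs2⟩ := exists_between (max_lt hpq (mem_Iio.1 hr))
    have hmono : StrictMonoOn (fun t => x t ^ 2) (Icc s q) := by
      refine strictMonoOn_of_deriv_pos (convex_Icc s q)
        (hx.diff.continuous.pow 2).continuousOn ?_
      rw [interior_Icc]
      intro t ht
      have htI : t ∈ Ioo p q := ⟨(le_max_left _ _).trans_lt (hs1.trans ht.1), ht.2⟩
      have htr : t ∈ Ioo r q := ⟨(le_max_right _ _).trans_lt (hs1.trans ht.1), ht.2⟩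
      have hd : HasDerivAt (fun t => x t ^ 2) (2 * (x t * deriv x t)) t :=
        ((hx.diff t).hasDerivAt.pow 2).congr_deriv (by simp; ring)
      rw [hd.deriv, hx.eq t]
      have h1 := hA t htI
      have h2 := mul_pos (hs t htI) (hr' htr)
      linarith
    have := hmono ⟨le_rfl, hs2.le⟩ ⟨hs2.le, le_rfl⟩ hs2
    simp only [hq] at this
    nlinarith [sq_nonneg (x s)]
  · exact hs

/-- For two negative solutions on an arch with `A > 0`, `(x - y) * (A / x - A / y) ≤ 0`, so
`(x - y) ^ 2 * exp (-2 c t)` is nonincreasing, and it starts at `0`. -/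
lemma eq_on_arch_of_pos (h : Hyp T A B C lam a c) {x y : ℝ → ℝ} (hx : IsSol A B C x)
    (hy : IsSol A B C y) {p q : ℝ} (hpq : p < q) (hA : ∀ t ∈ Ioo p q, 0 < A t)
    (hxp : x p = 0) (hyp : y p = 0) (hxq : x q = 0) (hyq : y q = 0) :
    ∀ t ∈ Ioo p q, x t = y t := by
  intro t ht
  have hxn := hx.neg_of_arch h hpq hA hxq
  have hyn := hy.neg_of_arch h hpq hA hyq
  have hexp : ∀ s : ℝ, HasDerivAt (fun s => Real.exp (-(2 * c) * s))
      (Real.exp (-(2 * c) * s) * (-(2 * c))) s := by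
    intro s
    simpa using ((hasDerivAt_id s).const_mul (-(2 * c))).exp
  have hsub : ∀ s ∈ Ioo p t, s ∈ Ioo p q := fun s hs => ⟨hs.1, hs.2.trans ht.2⟩
  have hxc := hx.diff.continuous
  have hyc := hy.diff.continuous
  have := nonpos_of_barrier (g := fun s => (x s - y s) ^ 2 * Real.exp (-(2 * c) * s))
    (g' := fun s => (2 * ((x s - y s) * ((A s / x s + B s + C s * x s) -
      (A s / y s + B s + C s * y s)))) * Real.exp (-(2 * c) * s) +
      (x s - y s) ^ 2 * (Real.exp (-(2 * c) * s) * (-(2 * c)))) ht.1.le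
    (by fun_prop) (by simp [hxp, hyp])
    (fun s hs => by
      have h1 := hx.hasDerivAt (hxn s (hsub s hs)).ne
      have h2 := hy.hasDerivAt (hyn s (hsub s hs)).ne
      exact (((h1.sub h2).pow 2).congr_deriv (by simp; ring)).mul (hexp s))
    (fun s hs _ => by
      have h1 := hxn s (hsub s hs)
      have h2 := hyn s (hsub s hs)
      have h3 := hA s (hsub s hs)
      have e1 : (x s - y s) * ((A s / x s + B s + C s * x s) - (A s / y s + B s + C s * y s)) =
          C s * (x s - y s) ^ 2 - A s * (x s - y s) ^ 2 / (x s * y s) := by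
        have := h1.ne
        have := h2.ne
        field_simp
        ring
      have h4 : 0 ≤ A s * (x s - y s) ^ 2 / (x s * y s) :=
        div_nonneg (by positivity) (mul_pos_of_neg_of_neg h1 h2).le
      have h5 : C s * (x s - y s) ^ 2 ≤ c * (x s - y s) ^ 2 :=
        mul_le_mul_of_nonneg_right ((le_abs_self _).trans (h.absC s)) (sq_nonneg _)
      have h6 := Real.exp_pos (-(2 * c) * s)
      rw [e1]
      nlinarith)
  have h7 := nonpos_of_mul_nonpos_left this (Real.exp_pos _)
  have h8 : (x t - y t) ^ 2 = 0 := le_antisymm h7 (sq_nonneg _)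
  exact sub_eq_zero.1 (pow_eq_zero_iff (two_ne_zero) |>.1 h8)

lemma eq_of_vanish (h : Hyp T A B C lam a c) {x y : ℝ → ℝ} (hx : IsSol A B C x)
    (hy : IsSol A B C y) (hx0 : ∀ t, A t = 0 → x t = 0) (hy0 : ∀ t, A t = 0 → y t = 0) :
    x = y := by
  funext t
  by_cases ht : A t = 0
  · rw [hx0 t ht, hy0 t ht]
  obtain ⟨p, q, hpq, htI⟩ := exists_arch h ht
  rcases sign_const h.contA.continuous.continuousOn hpq.ne with hs | hs
  · exact eq_on_arch_of_pos h hx hy hpq.lt hs (hx0 _ hpq.left) (hy0 _ hpq.left)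
      (hx0 _ hpq.right) (hy0 _ hpq.right) t htI
  · have := eq_on_arch_of_pos h.rev hx.rev hy.rev (neg_lt_neg hpq.lt)
      (fun s hs' => by
        have := hs (-s) ⟨by linarith [hs'.2], by linarith [hs'.1]⟩
        simpa [rev] using this)
      (by simp [rev, hx0 _ hpq.right]) (by simp [rev, hy0 _ hpq.right])
      (by simp [rev, hx0 _ hpq.left]) (by simp [rev, hy0 _ hpq.left])
      (-t) ⟨neg_lt_neg htI.2, neg_lt_neg htI.1⟩
    simpa [rev] using this

/-- If `x z > 0` at a zero `z` of `A`, then `x` stays above the line `lam * (t - z)` for a whole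
period: at a first contact point the equation gives `x' > lam`. Hence a periodic `x` has no zero. -/
lemma not_pos_of_periodic (h : Hyp T A B C lam a c) {x : ℝ → ℝ} (hx : IsSol A B C x)
    (hper : Function.Periodic x T) (h0 : ∃ t, x t = 0) {z : ℝ} (hz : A z = 0) : x z ≤ 0 := by
  by_contra! hpos
  have hT := h.T_pos
  have hlam := h.lam_pos
  obtain ⟨t₀, ht₀⟩ := h0
  obtain ⟨y, hy, hyt⟩ := hper.exists_mem_Ico hT t₀ z
  have hcont : Continuous fun t => x t - lam * (t - z) := by
    have := hx.diff.continuous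
    fun_prop
  have hcl : IsClosed ((fun t => x t - lam * (t - z)) ⁻¹' Iic 0) := isClosed_Iic.preimage hcont
  obtain ⟨t, ⟨ht, htle⟩, htmin⟩ := (isCompact_Icc.inter_right hcl).exists_isLeast
    (s := Icc z (z + T) ∩ (fun t => x t - lam * (t - z)) ⁻¹' Iic 0)
    ⟨y, Ico_subset_Icc_self hy, by
      simp only [mem_preimage, mem_Iic, ← hyt, ht₀]
      have := mul_nonneg hlam.le (sub_nonneg.2 hy.1)
      linarith⟩
  simp only [mem_preimage, mem_Iic] at htle
  have hzt : z < t := by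
    refine lt_of_le_of_ne ht.1 ?_
    rintro rfl
    simp only [sub_self, mul_zero, sub_zero] at htle
    linarith
  have hgt : ∀ s ∈ Ioo z t, 0 < x s - lam * (s - z) := by
    intro s hs
    by_contra! hle
    have := htmin ⟨⟨hs.1.le, hs.2.le.trans ht.2⟩, hle⟩
    linarith [hs.2]
  have hge : 0 ≤ x t - lam * (t - z) := by
    refine ge_of_tendsto (hcont.continuousAt.mono_left nhdsWithin_le_nhds :
      Tendsto _ (𝓝[<] t) _) ?_
    filter_upwards [Ioo_mem_nhdsLT hzt] with s hs using (hgt s hs).le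
  have hxt : x t = lam * (t - z) := by linarith
  have hxpos : 0 < x t := by rw [hxt]; exact mul_pos hlam (sub_pos.2 hzt)
  have hd : HasDerivAt (fun t => x t - lam * (t - z))
      ((A t / x t + B t + C t * x t) - lam * 1) t :=
    (hx.hasDerivAt hxpos.ne').sub (((hasDerivAt_id t).sub_const z).const_mul lam)
  have hdle : (A t / x t + B t + C t * x t) - lam * 1 ≤ 0 := by
    refine le_of_tendsto ((hasDerivAt_iff_tendsto_slope.1 hd).mono_left
        (nhdsWithin_mono _ (fun s (hs : s ∈ Iio t) => (mem_Iio.1 hs).ne))) ?_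
    filter_upwards [Ioo_mem_nhdsLT hzt] with s hs
    rw [slope_def_field, le_antisymm htle hge, sub_zero]
    exact div_nonpos_of_nonneg_of_nonpos (hgt s hs).le (sub_neg.2 hs.2).le
  have h1 : -(a / lam) ≤ A t / x t := by
    have h2 : -(a * (t - z)) ≤ A t := by
      have := h.rev.A_le (q := -z) (t := -t) (by simp [rev, hz]) (by linarith)
      simp only [rev, neg_neg] at this
      linarith
    rw [← neg_div, div_le_div_iff₀ hlam hxpos, hxt]
    nlinarith
  have h3 : -(c * (lam * T)) ≤ C t * x t := by
    have h4 : |C t * x t| ≤ c * (lam * T) := by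
      rw [abs_mul, abs_of_pos hxpos]
      refine mul_le_mul (h.absC t) ?_ hxpos.le h.c_nonneg
      rw [hxt]
      exact mul_le_mul_of_nonneg_left (by linarith [ht.2]) hlam.le
    exact (abs_le.1 h4).1
  have h5 := h.ltB t
  nlinarith

lemma vanish_of_periodic (h : Hyp T A B C lam a c) {x : ℝ → ℝ} (hx : IsSol A B C x)
    (hper : Function.Periodic x T) (h0 : ∃ t, x t = 0) : ∀ z, A z = 0 → x z = 0 := by
  intro z hz
  refine le_antisymm (not_pos_of_periodic h hx hper h0 hz) ?_
  have := not_pos_of_periodic h.rev hx.rev (z := -z)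
    (fun t => by simp only [rev, neg_add, ← sub_eq_add_neg, hper.sub_eq])
    (by obtain ⟨t, ht⟩ := h0; exact ⟨-t, by simp [rev, ht]⟩) (by simp [rev, hz])
  simpa [rev] using this

theorem existsUnique_of_hyp (h : Hyp T A B C lam a c) :
    ∃! x : ℝ → ℝ, ContDiff ℝ 1 x ∧ Function.Periodic x T ∧
      (∀ t : ℝ, x t * deriv x t = A t + B t * x t + C t * x t ^ 2) ∧
      (∃ t₀ : ℝ, x t₀ = 0) ∧ (∃ t : ℝ, x t ≠ 0) := by
  obtain ⟨x, hxc, hxe, hx0, hxne⟩ := exists_sol h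
  have hxs : IsSol A B C x := ⟨hxc.differentiable (by simp), hxe⟩
  obtain ⟨z, hz⟩ := h.zero
  have hper : Function.Periodic x T := by
    have hs : IsSol A B C (fun t => x (t + T)) := by
      refine ⟨hxs.diff.comp (differentiable_id.add_const T), fun t => ?_⟩
      have := hxe (t + T)
      rw [h.perA, h.perB, h.perC] at this
      rwa [deriv_comp_add_const]
    have := eq_of_vanish h hs hxs (fun t ht => hx0 _ (by rw [h.perA, ht])) hx0
    exact fun t => congrFun this t
  refine ⟨x, ⟨hxc, hper, hxe, ⟨z, hx0 z hz⟩, ?_⟩, ?_⟩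
  · obtain ⟨q, hq⟩ := exists_arch_right h hz
    obtain ⟨t, ht⟩ := exists_between hq.lt
    exact ⟨t, hxne t (hq.ne t ht)⟩
  · rintro y ⟨hyc, hyper, hye, hy0, -⟩
    have hys : IsSol A B C y := ⟨hyc.differentiable (by simp), hye⟩
    exact eq_of_vanish h hys hxs (vanish_of_periodic h hys hyper hy0) hx0

end

/-- The choice `lam = b / (2 * (1 + c * T))` minimises `lam * (1 + c * T) + a / lam` in the critical
case `a = b ^ 2 / (4 * (1 + c * T))`, where the minimum is `b`; so any `a` strictly between `-m` and
this critical value works. -/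
lemma hyp_of_bounds {T : ℝ} (hT : 0 < T) {A B C : ℝ → ℝ}
    (hA : ContDiff ℝ 1 A) (hB : ContDiff ℝ 1 B) (hC : ContDiff ℝ 1 C)
    (hAper : Function.Periodic A T) (hBper : Function.Periodic B T)
    (hCper : Function.Periodic C T) (hzero : ∃ t, A t = 0)
    (hsimple : ∀ t : ℝ, A t = 0 → deriv A t ≠ 0) {b m c : ℝ} (hb : 0 < b) (hc : 0 ≤ c)
    (hcond : b ^ 2 > -4 * m * (1 + T * c)) (hm : ∀ t, m ≤ deriv A t) (hcC : ∀ t, |C t| ≤ c)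
    (hbB : ∀ t, b ≤ B t) : ∃ lam a, Hyp T A B C lam a c := by
  have hk : 0 < 1 + c * T := by positivity
  have hm0 : m ≤ 0 := by
    obtain ⟨z, hz⟩ := hzero
    obtain ⟨s, -, hs⟩ := exists_deriv_eq_zero (f := A) (a := z) (b := z + T) (by linarith)
      hA.continuous.continuousOn (by rw [hAper])
    rw [← hs]; exact hm s
  have hlt : -m < b ^ 2 / (4 * (1 + c * T)) := by
    rw [lt_div_iff₀ (by positivity)]
    linarith
  obtain ⟨a, ha1, ha2⟩ := exists_between hlt
  refine ⟨b / (2 * (1 + c * T)), a, ⟨hT, hA, hB.continuous, hC.continuous, hAper, hBper, hCper,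
    hzero, hsimple, by positivity, by linarith, hc, fun t => by linarith [hm t], hcC, fun t => ?_⟩⟩
  refine lt_of_lt_of_le ?_ (hbB t)
  have e1 : b / (2 * (1 + c * T)) * (1 + c * T) = b / 2 := by field_simp
  have e2 : a / (b / (2 * (1 + c * T))) = a * (2 * (1 + c * T)) / b := by field_simp
  rw [lt_div_iff₀ (by positivity)] at ha2
  have h3 : a * (2 * (1 + c * T)) / b < b / 2 := by
    rw [div_lt_div_iff₀ hb two_pos]
    nlinarith
  linarith

end Abel

/-- under (H), if all zeros of A are simple then (N) has exactly one C¹,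
T-periodic solution with nonconstant sign. -/
theorem unique_nonconstant_sign_solution
    (T : ℝ) (hT : 0 < T) (A B C : ℝ → ℝ)
    (hA : ContDiff ℝ 1 A) (hB : ContDiff ℝ 1 B) (hC : ContDiff ℝ 1 C)
    (hAper : Function.Periodic A T) (hBper : Function.Periodic B T)
    (hCper : Function.Periodic C T)
    (hzero : ∃ t ∈ Icc (0 : ℝ) T, A t = 0)
    (hcond : (sInf ((fun t => |B t|) '' Icc (0 : ℝ) T)) ^ 2 >
      -4 * sInf ((fun t => deriv A t) '' Icc (0 : ℝ) T) *
        (1 + T * sSup ((fun t => |C t|) '' Icc (0 : ℝ) T)))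
    (hsimple : ∀ t : ℝ, A t = 0 → deriv A t ≠ 0) :
    ∃! x : ℝ → ℝ, ContDiff ℝ 1 x ∧ Function.Periodic x T ∧
      (∀ t : ℝ, x t * deriv x t = A t + B t * x t + C t * x t ^ 2) ∧
      (∃ t₀ : ℝ, x t₀ = 0) ∧ (∃ t : ℝ, x t ≠ 0) := by
  set b := sInf ((fun t => |B t|) '' Icc (0 : ℝ) T) with hbdef
  set m := sInf ((fun t => deriv A t) '' Icc (0 : ℝ) T) with hmdef
  set c := sSup ((fun t => |C t|) '' Icc (0 : ℝ) T) with hcdef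
  have hdA : Continuous (deriv A) := hA.continuous_deriv (by simp)
  have hdAper : Function.Periodic (deriv A) T := fun t => by
    rw [← deriv_comp_add_const, hAper.funext]
  have hI : ∀ t, ∃ s ∈ Icc (0 : ℝ) T, ∃ n : ℤ, s = t - n • T := fun t => by
    obtain ⟨n, hn, -⟩ := existsUnique_sub_zsmul_mem_Ico hT t 0
    rw [zero_add] at hn
    exact ⟨t - n • T, Ico_subset_Icc_self hn, n, rfl⟩
  have hbB : ∀ t, b ≤ |B t| := fun t => by
    obtain ⟨s, hs, n, rfl⟩ := hI t
    rw [← hBper.sub_zsmul_eq n]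
    exact csInf_le (isCompact_Icc.bddBelow_image hB.continuous.abs.continuousOn)
      (mem_image_of_mem (fun t => |B t|) hs)
  have hm : ∀ t, m ≤ deriv A t := fun t => by
    obtain ⟨s, hs, n, rfl⟩ := hI t
    rw [← hdAper.sub_zsmul_eq n]
    exact csInf_le (isCompact_Icc.bddBelow_image hdA.continuousOn)
      (mem_image_of_mem (fun t => deriv A t) hs)
  have hcC : ∀ t, |C t| ≤ c := fun t => by
    obtain ⟨s, hs, n, rfl⟩ := hI t
    rw [← hCper.sub_zsmul_eq n]
    exact le_csSup (isCompact_Icc.bddAbove_image hC.continuous.abs.continuousOn)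
      (mem_image_of_mem (fun t => |C t|) hs)
  have hc0 : 0 ≤ c := (abs_nonneg _).trans (hcC 0)
  obtain ⟨z, -, hz⟩ := hzero
  -- Rolle on one period
  have hm0 : m ≤ 0 := by
    obtain ⟨s, -, hs⟩ := exists_deriv_eq_zero (f := A) (a := z) (b := z + T) (by linarith)
      hA.continuous.continuousOn (by rw [hAper])
    rw [← hs]; exact hm s
  have hb0 : 0 ≤ b := Real.sInf_nonneg (by rintro _ ⟨t, -, rfl⟩; exact abs_nonneg _)
  have hb : 0 < b := by
    refine lt_of_le_of_ne hb0 fun hb' => ?_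
    rw [← hb'] at hcond
    have : 0 ≤ -m * (1 + T * c) := mul_nonneg (by linarith) (by positivity)
    nlinarith
  have hBne : ∀ t, B t ≠ 0 := fun t h0 => by
    have := hbB t
    rw [h0, abs_zero] at this
    linarith
  have hsign : (∀ t, 0 < B t) ∨ (∀ t, B t < 0) := by
    by_contra! hcon
    obtain ⟨⟨s, hs⟩, t, ht⟩ := hcon
    obtain ⟨y, hy⟩ := mem_range_of_exists_le_of_exists_ge hB.continuous ⟨s, hs⟩ ⟨t, ht⟩
    exact hBne y hy
  rcases hsign with hs | hs
  · obtain ⟨lam, a, h⟩ := Abel.hyp_of_bounds hT hA hB hC hAper hBper hCper ⟨z, hz⟩ hsimple hb hc0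
      hcond hm hcC (fun t => by have := hbB t; rwa [abs_of_pos (hs t)] at this)
    exact Abel.existsUnique_of_hyp h
  · obtain ⟨lam, a, h⟩ := Abel.hyp_of_bounds (B := fun t => -B t) hT hA hB.neg hC hAper
      (fun t => by simp only [hBper t]) hCper ⟨z, hz⟩ hsimple hb hc0
      hcond hm hcC (fun t => by have := hbB t; rwa [abs_of_neg (hs t)] at this)
    -- `x ↦ -x` exchanges the solutions for `B` with those for `-B`
    obtain ⟨y, ⟨hyc, hyp, hye, ⟨t₀, ht₀⟩, t₁, ht₁⟩, huniq⟩ := Abel.existsUnique_of_hyp h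
    refine ⟨fun t => -y t, ⟨hyc.neg, fun t => by simp only [hyp t], fun t => ?_,
      ⟨t₀, by simp [ht₀]⟩, t₁, by simpa using ht₁⟩, ?_⟩
    · have := hye t
      rw [deriv.fun_neg]
      linarith
    · rintro w ⟨hwc, hwp, hwe, ⟨s₀, hs₀⟩, s₁, hs₁⟩
      have := huniq (fun t => -w t) ⟨hwc.neg, fun t => by simp only [hwp t], fun t => by
        have := hwe t
        rw [deriv.fun_neg]
        linarith, ⟨s₀, by simp [hs₀]⟩, s₁, by simpa using hs₁⟩
      funext t
      have := congrFun this t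
      linarith
end

section
/- Assume (H). Then every C¹, T-periodic solution x* of (N) with nonconstant sign is unstable, in the following sense: there exist ε > 0 and t₀ ∈ ℝ such that for every δ > 0 there exist t₃ > t₀ and a solution x of (N) on [t₀, t₃) with |x(t₀) − x*(t₀)| < δ and sup_{t ∈ [t₀, t₃)} |x(t) − x*(t)| ≥ ε. -/
open Set Filter Topology

/-!
Let `t₁` be a zero of the periodic solution `x`; the equation forces `A t₁ = 0`. Write `b`, `c`, `-m`
for `min |B|`, `max |C|`, `min A'`. Periodicity of `A` gives `m ≥ 0`, so (H) gives `b > 0` and `B`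
has constant sign; the symmetry `x ↦ -x`, `B ↦ -B` reduces to `B ≥ b > 0`.

The key fact is that every solution `y` starting at `t₁` from a small value `η > 0` stays above the
line `η + k (t - t₁)` on `[t₁, t₁ + T]`, where `k = b / (2 (1 + T c))`. Indeed `A t ≥ -m (t - t₁)`,
so the slope field `A / y + B + C y` on the line is at least `-m / k + b - c (η + k T)`, and this
exceeds `k` for small `η` precisely because (H) makes `k² (1 + T c) - b k + m` negative. Hence
`y (t₁ + T) ≥ k T` however small `η` is, whereas `x (t₁ + T) = x t₁ = 0`: starting at time `t₁`, the
solutions `y` separate from `x` by a fixed amount (`unstable_of_pos`).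

Existence of `y` on the whole period (`exists_solution_above_line`) comes from clamping the state in
the slope field to a compact interval `[η, M]`, solving the resulting bounded Lipschitz equation,
and checking with the line above and an exponential upper barrier that the clamp is never active.
-/

open scoped NNReal in
/-- A bounded field that is globally Lipschitz in the state has solutions on the whole of `[a, b]`:
the Picard–Lindelöf ball can be taken of radius `L * (b - a)`. -/
lemma exists_solution_of_bounded_lipschitz (F : ℝ → ℝ → ℝ) {a b : ℝ} (hab : a ≤ b) (K L : ℝ≥0)
    (hlip : ∀ t ∈ Icc a b, LipschitzWith K (F t))
    (hcont : ∀ z, ContinuousOn (fun t => F t z) (Icc a b))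
    (hbd : ∀ t ∈ Icc a b, ∀ z, |F t z| ≤ L) (y₀ : ℝ) :
    ∃ y : ℝ → ℝ, y a = y₀ ∧
      ∀ t ∈ Icc a b, HasDerivWithinAt y (F t (y t)) (Icc a b) t := by
  have h : IsPicardLindelof F (⟨a, left_mem_Icc.2 hab⟩ : Icc a b) y₀
      (L * (b - a).toNNReal) 0 L K := by
    refine ⟨fun t ht => (hlip t ht).lipschitzOnWith, fun z _ => hcont z,
      fun t ht z _ => hbd t ht z, ?_⟩
    simp [hab]
  exact h.exists_eq_forall_mem_Icc_hasDerivWithinAt₀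

/-- When `B ≥ b > 0`, there are solutions on `[t₁, t₁ + T]` starting from arbitrarily small positive
values at `t₁` and lying above a line `k (t - t₁)` whose slope does not depend on the starting
value. -/
lemma exists_solution_above_line {T b c m t₁ : ℝ} (hT : 0 < T) {A B C : ℝ → ℝ}
    (hA : Continuous A) (hB : Continuous B) (hC : Continuous C)
    (hb : 0 < b) (hm : 0 ≤ m) (hc : 0 ≤ c)
    (hcond : 4 * m * (1 + T * c) < b ^ 2)
    (hAm : ∀ t, t₁ ≤ t → -m * (t - t₁) ≤ A t)
    (hBb : ∀ t, b ≤ B t) (hCc : ∀ t, |C t| ≤ c) :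
    ∃ k > 0, ∀ δ > 0, ∃ y y' : ℝ → ℝ, 0 < y t₁ ∧ y t₁ < δ ∧
      (∀ t ∈ Icc t₁ (t₁ + T), HasDerivWithinAt y (y' t) (Icc t₁ (t₁ + T)) t ∧
        y t * y' t = A t + B t * y t + C t * y t ^ 2) ∧
      ∀ t ∈ Icc t₁ (t₁ + T), k * (t - t₁) ≤ y t := by
  have hTc : 0 < 1 + T * c := by positivity
  set k := b / (2 * (1 + T * c)) with hk
  have hk0 : 0 < k := by positivity
  -- `k` minimises `k² (1 + T c) - b k + m`, and (H) makes the minimum negative.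
  obtain ⟨Δ, hΔ⟩ : ∃ Δ, Δ = b * k - m - k ^ 2 * (1 + T * c) := ⟨_, rfl⟩
  have hΔ0 : 0 < Δ := by
    have hb2 : b = 2 * (1 + T * c) * k := by rw [hk]; field_simp
    have : 4 * m * (1 + T * c) < 4 * (k ^ 2 * (1 + T * c)) * (1 + T * c) := by
      rw [hb2] at hcond; linarith
    have := lt_of_mul_lt_mul_right this hTc.le
    have h2 : b * k = 2 * (k ^ 2 * (1 + T * c)) := by rw [hb2]; ring
    linarith
  refine ⟨k, hk0, fun δ hδ => ?_⟩
  obtain ⟨η, hη0, hηδ, hηΔ⟩ : ∃ η > 0, η < δ ∧ k * c * η < Δ := by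
    refine ⟨min (δ / 2) (Δ / (2 * (k * (c + 1)))), by positivity, ?_, ?_⟩
    · exact (min_le_left _ _).trans_lt (by linarith)
    · have h1 := min_le_right (δ / 2) (Δ / (2 * (k * (c + 1))))
      have h2 : k * (c + 1) * (Δ / (2 * (k * (c + 1)))) = Δ / 2 := by field_simp
      have h3 : 0 ≤ min (δ / 2) (Δ / (2 * (k * (c + 1)))) := by positivity
      have h4 : 0 < k * (c + 1) := by positivity
      nlinarith [mul_le_mul_of_nonneg_left h1 h4.le]
  obtain ⟨a, ha⟩ := isCompact_Icc.exists_bound_of_continuousOn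
    (hA.continuousOn (s := Icc t₁ (t₁ + T)))
  obtain ⟨β, hβ⟩ := isCompact_Icc.exists_bound_of_continuousOn
    (hB.continuousOn (s := Icc t₁ (t₁ + T)))
  simp only [Real.norm_eq_abs] at ha hβ
  have ht₁ : t₁ ∈ Icc t₁ (t₁ + T) := left_mem_Icc.2 (by linarith)
  have ha0 : 0 ≤ a := (abs_nonneg _).trans (ha t₁ ht₁)
  have hβ0 : 0 ≤ β := (abs_nonneg _).trans (hβ t₁ ht₁)
  -- Upper barrier `D * exp ((c + 1) (t - t₁))`, bounded by `M` on one period.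
  obtain ⟨D, hD⟩ : ∃ D, D = a / η + β + η + k * T + 1 := ⟨_, rfl⟩
  have haη : 0 ≤ a / η := by positivity
  have hkT : 0 < k * T := by positivity
  have hD0 : 0 < D := by linarith
  obtain ⟨M, hM⟩ : ∃ M, M = D * Real.exp ((c + 1) * T) := ⟨_, rfl⟩
  have hDM : D ≤ M := by
    rw [hM]
    exact le_mul_of_one_le_right hD0.le (Real.one_le_exp (by positivity))
  let p : ℝ → ℝ := fun z => max η (min z M)
  have hpη : ∀ z, η ≤ p z := fun z => le_max_left _ _
  have hpM : ∀ z, p z ≤ M := fun z => max_le (by linarith) (min_le_right _ _)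
  have hpid : ∀ z, η ≤ z → z ≤ M → p z = z := fun z h1 h2 => by
    simp only [p]; rw [min_eq_left h2, max_eq_right h1]
  have hplip : ∀ z w, |p z - p w| ≤ |z - w| := fun z w => by
    simp only [p]
    refine (abs_max_sub_max_le_max _ _ _ _).trans ?_
    simp only [sub_self, abs_zero]
    refine max_le (abs_nonneg _) ((abs_min_sub_min_le_max _ _ _ _).trans ?_)
    simp
  -- The field with its state clamped to `[η, M]` is bounded and globally Lipschitz.
  let F : ℝ → ℝ → ℝ := fun t z => A t / p z + B t + C t * p z
  have hM0 : 0 < M := by linarith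
  obtain ⟨y, hy0, hy⟩ := exists_solution_of_bounded_lipschitz F (a := t₁) (b := t₁ + T)
    (by linarith) (a / η ^ 2 + c).toNNReal (a / η + β + c * M).toNNReal
    (by
      intro t ht
      refine LipschitzWith.of_dist_le_mul fun z w => ?_
      rw [Real.coe_toNNReal _ (by positivity), Real.dist_eq, Real.dist_eq]
      have hz := hpη z
      have hw := hpη w
      have hz0 : 0 < p z := by linarith
      have hw0 : 0 < p w := by linarith
      have e : F t z - F t w = (C t - A t / (p z * p w)) * (p z - p w) := by
        simp only [F]; field_simp; ring
      rw [e, abs_mul]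
      refine mul_le_mul ?_ (hplip z w) (abs_nonneg _) (by positivity)
      have h1 : |A t / (p z * p w)| ≤ a / η ^ 2 := by
        rw [abs_div, abs_of_pos (by positivity : 0 < p z * p w)]
        exact div_le_div₀ ha0 (ha t ht) (by positivity) (by nlinarith)
      have := abs_sub (C t) (A t / (p z * p w))
      linarith [hCc t])
    (by intro z; fun_prop)
    (by
      intro t ht z
      rw [Real.coe_toNNReal _ (by positivity)]
      have hz := hpη z
      have hz0 : 0 < p z := by linarith
      have h1 : |A t / p z| ≤ a / η := by
        rw [abs_div, abs_of_pos hz0]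
        exact div_le_div₀ ha0 (ha t ht) hη0 hz
      have h2 : |C t * p z| ≤ c * M := by
        rw [abs_mul, abs_of_pos hz0]
        exact mul_le_mul (hCc t) (hpM z) hz0.le hc
      have h3 := abs_add_three (A t / p z) (B t) (C t * p z)
      linarith [hβ t ht]) η
  have hycont : ContinuousOn y (Icc t₁ (t₁ + T)) := fun t ht => (hy t ht).continuousWithinAt
  have hyright : ∀ t ∈ Ico t₁ (t₁ + T), HasDerivWithinAt y (F t (y t)) (Ici t) t :=
    fun t ht => (hy t (Ico_subset_Icc_self ht)).mono_of_mem_nhdsWithin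
      (mem_of_superset (Icc_mem_nhdsGE ht.2) (Icc_subset_Icc_left ht.1))
  have hline : ∀ t, HasDerivAt (fun t => η + k * (t - t₁)) k t := fun t => by
    simpa using (((hasDerivAt_id t).sub_const t₁).const_mul k).const_add η
  have hlow : ∀ t ∈ Icc t₁ (t₁ + T), η + k * (t - t₁) ≤ y t := by
    refine image_le_of_deriv_right_lt_deriv_boundary'
      (fun t _ => (hline t).continuousAt.continuousWithinAt)
      (fun t _ => (hline t).hasDerivWithinAt) (by simp [hy0]) hycont hyright ?_
    intro t ht heq
    have hs : 0 ≤ t - t₁ := by linarith [ht.1]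
    have hks : 0 ≤ k * (t - t₁) := by positivity
    have hksT : k * (t - t₁) ≤ k * T := by
      apply mul_le_mul_of_nonneg_left _ hk0.le; linarith [ht.2]
    have hyη : η ≤ y t := by linarith
    have hy0' : 0 < y t := by linarith
    have hyk : y t ≤ η + k * T := by linarith
    simp only [F]
    rw [hpid (y t) hyη (by linarith)]
    -- Multiplying by `k * y t > 0` clears both the denominator and the bound `-m / k`.
    suffices h : 0 < (A t / y t + B t + C t * y t - k) * (k * y t) by
      have := pos_of_mul_pos_left h (by positivity)
      linarith
    have e : (A t / y t + B t + C t * y t - k) * (k * y t)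
        = k * A t + k * y t * (B t + C t * y t - k) := by
      field_simp
      ring
    rw [e]
    have h1 : -m * y t ≤ k * A t := by
      have := mul_le_mul_of_nonneg_left (hAm t ht.1) hk0.le
      have := mul_nonneg hm hη0.le
      rw [← heq]; nlinarith
    have h2 : -c * (η + k * T) ≤ C t * y t := by
      have h3 : -c * y t ≤ C t * y t :=
        mul_le_mul_of_nonneg_right (by linarith [neg_abs_le (C t), hCc t]) hy0'.le
      have h4 := mul_le_mul_of_nonneg_left hyk hc
      linarith
    have h5 : k * y t * (b - c * (η + k * T) - k) ≤ k * y t * (B t + C t * y t - k) := by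
      apply mul_le_mul_of_nonneg_left _ (by positivity)
      linarith [hBb t]
    have h6 : 0 < y t * (Δ - k * c * η) := mul_pos hy0' (by linarith)
    have h7 : k * y t * (b - c * (η + k * T) - k) - m * y t = y t * (Δ - k * c * η) := by
      rw [hΔ]; ring
    linarith
  have hup : ∀ t ∈ Icc t₁ (t₁ + T), y t ≤ D * Real.exp ((c + 1) * (t - t₁)) := by
    have hder : ∀ t, HasDerivAt (fun t => D * Real.exp ((c + 1) * (t - t₁)))
        (D * (Real.exp ((c + 1) * (t - t₁)) * (c + 1))) t := fun t => by
      have := (((hasDerivAt_id t).sub_const t₁).const_mul (c + 1)).exp.const_mul D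
      simpa using this
    refine image_le_of_deriv_right_lt_deriv_boundary hycont hyright
      (by simp [hy0]; linarith) hder ?_
    intro t ht heq
    have hs : 0 ≤ t - t₁ := by linarith [ht.1]
    have hDy : D ≤ y t := by
      rw [heq]
      exact le_mul_of_one_le_right hD0.le (Real.one_le_exp (by positivity))
    have hyM : y t ≤ M := by
      rw [heq, hM]
      gcongr
      linarith [ht.2]
    have hη' : η ≤ y t := by linarith
    have hy0' : 0 < y t := by linarith
    simp only [F]
    rw [hpid (y t) hη' hyM, ← mul_assoc, ← heq]
    have h1 : A t / y t ≤ a / η :=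
      div_le_div₀ ha0 ((le_abs_self _).trans (ha t (Ico_subset_Icc_self ht))) hη0 hη'
    have h2 : B t ≤ β := (le_abs_self _).trans (hβ t (Ico_subset_Icc_self ht))
    have h3 : C t * y t ≤ c * y t :=
      mul_le_mul_of_nonneg_right ((le_abs_self _).trans (hCc t)) hy0'.le
    linarith
  refine ⟨y, fun t => F t (y t), by rw [hy0]; exact hη0, by rw [hy0]; exact hηδ,
    fun t ht => ⟨hy t ht, ?_⟩, fun t ht => by linarith [hlow t ht]⟩
  have hs : 0 ≤ k * (t - t₁) := mul_nonneg hk0.le (by linarith [ht.1])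
  have hη' : η ≤ y t := by linarith [hlow t ht]
  have hyM : y t ≤ M := by
    refine (hup t ht).trans ?_
    rw [hM]
    gcongr
    linarith [ht.2]
  have hy0' : 0 < y t := by linarith
  simp only [F]
  rw [hpid (y t) hη' hyM]
  field_simp

/-- Instability when `B ≥ b > 0`. Of `x` only continuity and the zeros at `t₁` and `t₁ + T` matter. -/
lemma unstable_of_pos {T b c m t₁ : ℝ} (hT : 0 < T) {A B C : ℝ → ℝ}
    (hA : Continuous A) (hB : Continuous B) (hC : Continuous C)
    (hb : 0 < b) (hm : 0 ≤ m) (hc : 0 ≤ c)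
    (hcond : 4 * m * (1 + T * c) < b ^ 2)
    (hAm : ∀ t, t₁ ≤ t → -m * (t - t₁) ≤ A t)
    (hBb : ∀ t, b ≤ B t) (hCc : ∀ t, |C t| ≤ c)
    {x : ℝ → ℝ} (hx : Continuous x) (hx₁ : x t₁ = 0) (hx₂ : x (t₁ + T) = 0) :
    ∃ ε > (0 : ℝ), ∃ t₀ : ℝ, ∀ δ > (0 : ℝ), ∃ t₃ > t₀, ∃ y y' : ℝ → ℝ,
      (∀ t ∈ Ico t₀ t₃, HasDerivWithinAt y (y' t) (Ico t₀ t₃) t ∧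
        y t * y' t = A t + B t * y t + C t * y t ^ 2) ∧
      |y t₀ - x t₀| < δ ∧
      ε ≤ sSup ((fun t => |y t - x t|) '' Ico t₀ t₃) := by
  obtain ⟨k, hk, hsol⟩ :=
    exists_solution_above_line hT hA hB hC hb hm hc hcond hAm hBb hCc
  -- A time just before `t₁ + T` at which the line is still well above `x`.
  obtain ⟨s, hs, hsT⟩ : ∃ s ∈ Ico t₁ (t₁ + T), k * T / 2 < k * (s - t₁) - x s := by
    have hg : ContinuousAt (fun s => k * (s - t₁) - x s) (t₁ + T) := by fun_prop
    have hev : ∀ᶠ s in 𝓝 (t₁ + T), k * T / 2 < k * (s - t₁) - x s := by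
      apply hg.eventually_const_lt
      have : 0 < k * T := by positivity
      simp only [hx₂]; ring_nf; linarith
    obtain ⟨s, hs⟩ := ((hev.filter_mono nhdsWithin_le_nhds).and
      (Ico_mem_nhdsLT (show t₁ < t₁ + T by linarith))).exists
    exact ⟨s, hs.2, hs.1⟩
  refine ⟨k * T / 2, by positivity, t₁, fun δ hδ => ?_⟩
  obtain ⟨y, y', hy0, hyδ, hy, hyk⟩ := hsol δ hδ
  refine ⟨t₁ + T, by linarith, y, y', fun t ht => ?_, ?_, ?_⟩
  · have h := hy t (Ico_subset_Icc_self ht)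
    exact ⟨h.1.mono Ico_subset_Icc_self, h.2⟩
  · rwa [hx₁, sub_zero, abs_of_pos hy0]
  · have hcont : ContinuousOn (fun t => |y t - x t|) (Icc t₁ (t₁ + T)) :=
      ContinuousOn.abs (ContinuousOn.sub (fun t ht => (hy t ht).1.continuousWithinAt)
        hx.continuousOn)
    have hbdd : BddAbove ((fun t => |y t - x t|) '' Ico t₁ (t₁ + T)) :=
      (isCompact_Icc.image_of_continuousOn hcont).bddAbove.mono (image_mono Ico_subset_Icc_self)
    refine le_trans ?_ (le_csSup hbdd (mem_image_of_mem _ hs))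
    have := hyk s (Ico_subset_Icc_self hs)
    exact le_trans (by linarith) (le_abs_self _)

/-- under (H), every C¹, T-periodic solution of (N) with nonconstant sign
is unstable. -/
theorem nonconstant_sign_solution_unstable
    (T : ℝ) (hT : 0 < T) (A B C : ℝ → ℝ)
    (hA : ContDiff ℝ 1 A) (hB : ContDiff ℝ 1 B) (hC : ContDiff ℝ 1 C)
    (hAper : Function.Periodic A T) (hBper : Function.Periodic B T)
    (hCper : Function.Periodic C T)
    (hzero : ∃ t ∈ Icc (0 : ℝ) T, A t = 0)
    (hcond : (sInf ((fun t => |B t|) '' Icc (0 : ℝ) T)) ^ 2 >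
      -4 * sInf ((fun t => deriv A t) '' Icc (0 : ℝ) T) *
        (1 + T * sSup ((fun t => |C t|) '' Icc (0 : ℝ) T)))
    (x : ℝ → ℝ) (hx : ContDiff ℝ 1 x) (hxper : Function.Periodic x T)
    (hxsol : ∀ t : ℝ, x t * deriv x t = A t + B t * x t + C t * x t ^ 2)
    (hx0 : ∃ t₀ : ℝ, x t₀ = 0) (hxne : ∃ t : ℝ, x t ≠ 0) :
    ∃ ε > (0 : ℝ), ∃ t₀ : ℝ, ∀ δ > (0 : ℝ), ∃ t₃ > t₀, ∃ y y' : ℝ → ℝ,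
      (∀ t ∈ Ico t₀ t₃, HasDerivWithinAt y (y' t) (Ico t₀ t₃) t ∧
        y t * y' t = A t + B t * y t + C t * y t ^ 2) ∧
      |y t₀ - x t₀| < δ ∧
      ε ≤ sSup ((fun t => |y t - x t|) '' Ico t₀ t₃) := by
  obtain ⟨t₁, ht₁⟩ := hx0
  have hA₁ : A t₁ = 0 := by simpa [ht₁] using (hxsol t₁).symm
  have hA' : Continuous (deriv A) := hA.continuous_deriv le_rfl
  have hA'per : Function.Periodic (deriv A) T := fun t => by
    rw [← deriv_comp_add_const, show (fun t => A (t + T)) = A from funext hAper]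
  generalize hb : sInf ((fun t => |B t|) '' Icc (0 : ℝ) T) = b at hcond
  generalize hμ : sInf ((fun t => deriv A t) '' Icc (0 : ℝ) T) = μ at hcond
  generalize hc : sSup ((fun t => |C t|) '' Icc (0 : ℝ) T) = c at hcond
  have hBb : ∀ t, b ≤ |B t| := fun t => by
    obtain ⟨s, hs, e⟩ := hBper.exists_mem_Ico₀ hT t
    rw [e, ← hb]
    exact csInf_le (isCompact_Icc.image_of_continuousOn hB.continuous.abs.continuousOn).bddBelow
      (mem_image_of_mem _ (Ico_subset_Icc_self hs))
  have hAμ : ∀ t, μ ≤ deriv A t := fun t => by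
    obtain ⟨s, hs, e⟩ := hA'per.exists_mem_Ico₀ hT t
    rw [e, ← hμ]
    exact csInf_le (isCompact_Icc.image_of_continuousOn hA'.continuousOn).bddBelow
      (mem_image_of_mem _ (Ico_subset_Icc_self hs))
  have hCc : ∀ t, |C t| ≤ c := fun t => by
    obtain ⟨s, hs, e⟩ := hCper.exists_mem_Ico₀ hT t
    rw [e, ← hc]
    exact le_csSup (isCompact_Icc.image_of_continuousOn hC.continuous.abs.continuousOn).bddAbove
      (mem_image_of_mem _ (Ico_subset_Icc_self hs))
  have hc0 : 0 ≤ c := (abs_nonneg _).trans (hCc 0)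
  have hμ0 : μ ≤ 0 := by
    obtain ⟨s, -, hs⟩ := exists_deriv_eq_zero hT hA.continuous.continuousOn
      (by simpa using (hAper 0).symm)
    exact hs ▸ hAμ s
  have hb0 : 0 < b := by
    have hb1 : 0 ≤ b := by
      rw [← hb]
      apply Real.sInf_nonneg
      rintro _ ⟨t, -, rfl⟩
      exact abs_nonneg _
    have : 0 ≤ -4 * μ * (1 + T * c) := mul_nonneg (by linarith) (by positivity)
    have hb2 : 0 < b ^ 2 := by linarith
    exact hb1.lt_of_ne (by rintro rfl; simp at hb2)
  have hAm : ∀ t, t₁ ≤ t → -(-μ) * (t - t₁) ≤ A t := fun t ht => by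
    have := mul_sub_le_image_sub_of_le_deriv (hA.differentiable one_ne_zero) hAμ ht
    rw [hA₁, sub_zero] at this
    linarith
  have hcond' : 4 * (-μ) * (1 + T * c) < b ^ 2 := by linarith
  have hx₂ : x (t₁ + T) = 0 := by rw [hxper, ht₁]
  have hBne : ∀ t, B t ≠ 0 := fun t h => by
    have := hBb t
    rw [h, abs_zero] at this
    linarith
  rcases le_total 0 (B 0) with h0 | h0
  · have hBpos : ∀ t, 0 < B t := fun t => by
      by_contra! h
      obtain ⟨s, hs⟩ := mem_range_of_exists_le_of_exists_ge hB.continuous ⟨t, h⟩ ⟨0, h0⟩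
      exact hBne s hs
    exact unstable_of_pos hT hA.continuous hB.continuous hC.continuous hb0 (by linarith) hc0
      hcond' hAm (fun t => abs_of_pos (hBpos t) ▸ hBb t) hCc hx.continuous ht₁ hx₂
  · have hBneg : ∀ t, B t < 0 := fun t => by
      by_contra! h
      obtain ⟨s, hs⟩ := mem_range_of_exists_le_of_exists_ge hB.continuous ⟨0, h0⟩ ⟨t, h⟩
      exact hBne s hs
    -- `y ↦ -y` turns the equation for `(A, B, C)` into the one for `(A, -B, C)`.
    obtain ⟨ε, hε, t₀, h⟩ := unstable_of_pos (B := fun t => -B t) (x := fun t => -x t) hT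
      hA.continuous hB.continuous.neg hC.continuous hb0 (by linarith) hc0 hcond' hAm
      (fun t => abs_of_neg (hBneg t) ▸ hBb t) hCc hx.continuous.neg (by simp [ht₁])
      (by simp [hx₂])
    refine ⟨ε, hε, t₀, fun δ hδ => ?_⟩
    obtain ⟨t₃, ht₃, y, y', hy, hyδ, hyε⟩ := h δ hδ
    have habs : ∀ t, |-y t - x t| = |y t - -x t| := fun t => by
      rw [← abs_neg]; congr 1; ring
    refine ⟨t₃, ht₃, fun t => -y t, fun t => -y' t, fun t ht => ⟨(hy t ht).1.neg, ?_⟩, ?_, ?_⟩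
    · linear_combination (hy t ht).2
    · simpa only [habs] using hyδ
    · simpa only [habs] using hyε
end

section
/- Assume (H) and that B(t) > 0 for all t. Let a < b be real numbers with A(t) ≥ 0 for all t ∈ [a, b]. Then there exists ε > 0 such that for every x_a ∈ (0, ε), every solution x of (N) on an interval [a, t₃) with t₃ ≤ b and x(a) = x_a satisfies x(t) > x_a for all t ∈ (a, t₃); in particular x remains strictly positive on [a, t₃). -/
/-!
If `ε` is the minimum of `B / (|C| + 1)` on `[a, b]`, then for `0 < xa < ε` every solution that meets
the level `xa` does so with positive slope, because `x' = A / x + B + C x ≥ B - |C| xa > 0` there.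
A solution starting at `xa` therefore cannot go below that level (a fencing argument), and it cannot
touch it at an interior time, since that time would be a local minimum with nonzero derivative.
-/

open Set Filter Topology

/-- under (H) with B > 0, if A ≥ 0 on [a,b], then small positive initial data
at t = a yield solutions of (N) that stay above their initial value, hence strictly positive. -/
theorem small_positive_solutions_stay_positive
    (T : ℝ) (hT : 0 < T) (A B C : ℝ → ℝ)
    (hA : ContDiff ℝ 1 A) (hB : ContDiff ℝ 1 B) (hC : ContDiff ℝ 1 C)
    (hAper : Function.Periodic A T) (hBper : Function.Periodic B T)
    (hCper : Function.Periodic C T)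
    (hzero : ∃ t ∈ Icc (0 : ℝ) T, A t = 0)
    (hcond : (sInf ((fun t => |B t|) '' Icc (0 : ℝ) T)) ^ 2 >
      -4 * sInf ((fun t => deriv A t) '' Icc (0 : ℝ) T) *
        (1 + T * sSup ((fun t => |C t|) '' Icc (0 : ℝ) T)))
    (hBpos : ∀ t : ℝ, 0 < B t)
    (a b : ℝ) (hab : a < b) (hAnn : ∀ t ∈ Icc a b, 0 ≤ A t) :
    ∃ ε > (0 : ℝ), ∀ xa ∈ Ioo (0 : ℝ) ε, ∀ t₃ : ℝ, a < t₃ → t₃ ≤ b →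
      ∀ x x' : ℝ → ℝ,
        (∀ t ∈ Ico a t₃, HasDerivWithinAt x (x' t) (Ico a t₃) t ∧
          x t * x' t = A t + B t * x t + C t * x t ^ 2) →
        x a = xa →
        (∀ t ∈ Ioo a t₃, xa < x t) ∧ (∀ t ∈ Ico a t₃, 0 < x t) := by
  -- Adding `1` to `|C|` keeps the quotient defined where `C` vanishes.
  obtain ⟨s, -, hs⟩ := isCompact_Icc.exists_isMinOn (nonempty_Icc.2 hab.le)
    (f := fun t => B t / (|C t| + 1))
    ((hB.continuous.div (hC.continuous.abs.add continuous_const)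
      (fun t => (by positivity : 0 < |C t| + 1).ne')).continuousOn)
  refine ⟨B s / (|C s| + 1), div_pos (hBpos s) (by positivity), ?_⟩
  rintro xa ⟨hxa0, hxa⟩ t₃ hat₃ ht₃b x x' hx hxaeq
  have hslope : ∀ t ∈ Ico a t₃, x t = xa → 0 < x' t := by
    intro t ht hxt
    have htb : t ∈ Icc a b := ⟨ht.1, ht.2.le.trans ht₃b⟩
    have h1 : xa < B t / (|C t| + 1) := hxa.trans_le (hs htb)
    rw [lt_div_iff₀ (by positivity)] at h1
    have h2 := (hx t ht).2
    rw [hxt] at h2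
    have h3 : 0 < B t + C t * xa := by nlinarith [neg_abs_le (C t)]
    have h4 : 0 < xa * x' t := by nlinarith [hAnn t htb, mul_pos hxa0 h3]
    exact pos_of_mul_pos_right h4 hxa0.le
  have hge : ∀ t ∈ Ico a t₃, xa ≤ x t := by
    intro t ht
    have hsub : Icc a t ⊆ Ico a t₃ := fun u hu => ⟨hu.1, hu.2.trans_lt ht.2⟩
    have := image_le_of_deriv_right_lt_deriv_boundary (f := fun u => -x u)
      (f' := fun u => -x' u) (a := a) (b := t) (B := fun _ => -xa) (B' := fun _ => 0)
      (fun u hu => ((hx u (hsub hu)).1.continuousWithinAt.mono hsub).neg)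
      (fun u hu => ((hx u (hsub ⟨hu.1, hu.2.le⟩)).1.mono_of_mem_nhdsWithin
        (mem_of_superset (Ico_mem_nhdsGE (hu.2.trans ht.2))
          (Ico_subset_Ico_left hu.1))).neg)
      (by simp [hxaeq]) (fun u => hasDerivAt_const u _)
      (fun u hu h => neg_lt_zero.2 (hslope u (hsub ⟨hu.1, hu.2.le⟩) (neg_injective h)))
      (right_mem_Icc.2 ht.1)
    exact neg_le_neg_iff.1 this
  refine ⟨fun t ht => (hge t ⟨ht.1.le, ht.2⟩).lt_of_ne fun h => ?_,
    fun t ht => hxa0.trans_le (hge t ht)⟩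
  have htI : t ∈ Ico a t₃ := ⟨ht.1.le, ht.2⟩
  have hmem : Ico a t₃ ∈ 𝓝 t := Ico_mem_nhds ht.1 ht.2
  have hmin : IsLocalMin x t := by
    filter_upwards [hmem] with u hu
    exact h ▸ hge u hu
  exact (hslope t htI h.symm).ne' (hmin.hasDerivAt_eq_zero ((hx t htI).1.hasDerivAt hmem))
end

section
/- Let A, B, C: ℝ → ℝ be continuous, let a ∈ ℝ, and assume A(a) = 0, A is differentiable at a with A′(a) < 0, and B(a) > 0. Then for no ε > 0 does there exist a solution x of (N) on [a, a + ε) with x(a) = 0 and x(t) < 0 for all t ∈ (a, a + ε). -/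
/-!
Just to the right of `a`, `A < 0` because `A a = 0` and `A' a < 0`, and `B + C x > 0` by continuity,
because `x a = 0` and `B a > 0`. Where also `x < 0`, the equation reads `x' = A / x + (B + C x)`, a
sum of positive terms. So `x' > 0` on a right neighbourhood of `a`, and the mean value theorem gives
`x t > x a = 0` there, contradicting `x t < 0`.
-/

open Set Filter Topology

/-- if A(a) = 0, A′(a) < 0 and B(a) > 0, then there is no solution of (N)
on [a, a+ε) with x(a) = 0 which is negative on (a, a+ε). -/
theorem no_negative_solution_at_unstable_node
    (A B C : ℝ → ℝ) (hA : Continuous A) (hB : Continuous B) (hC : Continuous C)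
    (a : ℝ) (hAa : A a = 0)
    (hAdiff : DifferentiableAt ℝ A a) (hA' : deriv A a < 0) (hBa : 0 < B a) :
    ∀ ε > (0 : ℝ), ¬ ∃ x x' : ℝ → ℝ,
      (∀ t ∈ Ico a (a + ε), HasDerivWithinAt x (x' t) (Ico a (a + ε)) t ∧
        x t * x' t = A t + B t * x t + C t * x t ^ 2) ∧
      x a = 0 ∧
      (∀ t ∈ Ioo a (a + ε), x t < 0) := by
  rintro ε hε ⟨x, x', hx, hxa, hneg⟩
  have haI : a ∈ Ico a (a + ε) := ⟨le_rfl, by linarith⟩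
  have hAneg : ∀ᶠ t in 𝓝[>] a, A t < 0 := by
    have hs := (hasDerivAt_iff_tendsto_slope.1 hAdiff.hasDerivAt).mono_left
      (nhdsWithin_mono a (fun t (ht : a < t) => ht.ne'))
    filter_upwards [hs.eventually (gt_mem_nhds hA'), self_mem_nhdsWithin] with t ht hat
    rw [slope_def_field, hAa, sub_zero, div_lt_iff₀ (sub_pos.2 hat), zero_mul] at ht
    exact ht
  have hBpos : ∀ᶠ t in 𝓝[>] a, 0 < B t + C t * x t := by
    have hxc : Tendsto x (𝓝[>] a) (𝓝 (x a)) := by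
      have h := (hx a haI).1.continuousWithinAt
      rw [← nhdsWithin_Ioo_eq_nhdsGT (by linarith : a < a + ε)]
      exact h.tendsto.mono_left (nhdsWithin_mono a Ioo_subset_Ico_self)
    have h := (hB.continuousAt.mono_left nhdsWithin_le_nhds : Tendsto B (𝓝[>] a) (𝓝 (B a))).add
      ((hC.continuousAt.mono_left nhdsWithin_le_nhds : Tendsto C (𝓝[>] a) (𝓝 (C a))).mul hxc)
    rw [hxa, mul_zero, add_zero] at h
    exact h.eventually (lt_mem_nhds hBa)
  obtain ⟨u, hu, hsub⟩ := mem_nhdsGT_iff_exists_Ioo_subset.1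
    ((hAneg.and hBpos).and (Ioo_mem_nhdsGT (by linarith : a < a + ε)))
  obtain ⟨b, hab, hbu⟩ := exists_between (show a < u from hu)
  have hbε : b < a + ε := (hsub ⟨hab, hbu⟩).2.2
  obtain ⟨c, ⟨hac, hcb⟩, hc⟩ := exists_hasDerivAt_eq_slope x x' hab
    (fun t ht => (hx t ⟨ht.1, ht.2.trans_lt hbε⟩).1.continuousWithinAt.mono
      (fun s hs => ⟨hs.1, hs.2.trans_lt hbε⟩))
    (fun t ht => (hx t ⟨ht.1.le, ht.2.trans hbε⟩).1.hasDerivAt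
      (Ico_mem_nhds ht.1 (ht.2.trans hbε)))
  obtain ⟨⟨hAc, hBc⟩, hcI⟩ := hsub ⟨hac, hcb.trans hbu⟩
  have hslope : x' c < 0 := by
    rw [hc, hxa, sub_zero]
    exact div_neg_of_neg_of_pos (hneg b ⟨hab, hbε⟩) (sub_pos.2 hab)
  have hxc := hneg c hcI
  have heq := (hx c ⟨hcI.1.le, hcI.2⟩).2
  -- The left side of the equation at `c` is positive, the right side `A + x (B + C x)` negative.
  have h1 := mul_pos_of_neg_of_neg hxc hslope
  have h2 := mul_neg_of_neg_of_pos hxc hBc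
  nlinarith
end

section
/- Assume (H) with B(t) > 0 for all t and min_{t∈[0,T]} A′(t) < 0, and set α := √(−(min_{t∈[0,T]} A′(t)) / (1 + T·max_{t∈[0,T]} |C(t)|)) > 0. Let a < b with b − a ≤ T, A(a) = A(b) = 0 and A(t) > 0 for all t ∈ (a, b). Then for every t ∈ (a, b), A(t)/(α·(t − b)) + B(t) + C(t)·α·(t − b) > α. -/
/-!
Write `m = -min A'`, `c = max |C|`, `K = 1 + T c` and `β = min |B|`, so that `α² K = m` and the
condition `β² > 4 m K = (2 α K)²` gives `β > 2 α K`. By periodicity these extrema bound the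
functions on all of `ℝ`. On `(a, b)` the mean value theorem and `A b = 0` give
`A t ≤ m (b - t)`, hence `A t / (α (t - b)) ≥ -m / α = -α K`, while `b - t ≤ T` gives
`C t * α (t - b) ≥ -α T c = -α (K - 1)`. The sum is therefore at least
`β - α K - α (K - 1) > α`.
-/

open Set Filter Topology

lemma periodic_sInf_le {f : ℝ → ℝ} {T : ℝ} (hT : 0 < T) (hf : Continuous f)
    (hp : Function.Periodic f T) (x : ℝ) : sInf (f '' Icc (0 : ℝ) T) ≤ f x := by
  obtain ⟨y, hy, hxy⟩ := hp.exists_mem_Ico₀ hT x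
  rw [hxy]
  exact csInf_le (isCompact_Icc.image hf).bddBelow (mem_image_of_mem f (Ico_subset_Icc_self hy))

lemma le_periodic_sSup {f : ℝ → ℝ} {T : ℝ} (hT : 0 < T) (hf : Continuous f)
    (hp : Function.Periodic f T) (x : ℝ) : f x ≤ sSup (f '' Icc (0 : ℝ) T) := by
  obtain ⟨y, hy, hxy⟩ := hp.exists_mem_Ico₀ hT x
  rw [hxy]
  exact le_csSup (isCompact_Icc.image hf).bddAbove (mem_image_of_mem f (Ico_subset_Icc_self hy))

/-- under (H) with B > 0 and min A′ < 0, set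
α = √(−(min A′)/(1 + T·max|C|)). Then along the line x = α(t−b), the slope field of (N)
exceeds α on (a,b), where a < b are consecutive zeros of A with A > 0 in between. -/
theorem slope_field_exceeds_alpha_on_line
    (T : ℝ) (hT : 0 < T) (A B C : ℝ → ℝ)
    (hA : ContDiff ℝ 1 A) (hB : ContDiff ℝ 1 B) (hC : ContDiff ℝ 1 C)
    (hAper : Function.Periodic A T) (hBper : Function.Periodic B T)
    (hCper : Function.Periodic C T)
    (hzero : ∃ t ∈ Icc (0 : ℝ) T, A t = 0)
    (hcond : (sInf ((fun t => |B t|) '' Icc (0 : ℝ) T)) ^ 2 >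
      -4 * sInf ((fun t => deriv A t) '' Icc (0 : ℝ) T) *
        (1 + T * sSup ((fun t => |C t|) '' Icc (0 : ℝ) T)))
    (hBpos : ∀ t : ℝ, 0 < B t)
    (hmin : sInf ((fun t => deriv A t) '' Icc (0 : ℝ) T) < 0)
    (α : ℝ)
    (hα : α = Real.sqrt (-(sInf ((fun t => deriv A t) '' Icc (0 : ℝ) T)) /
      (1 + T * sSup ((fun t => |C t|) '' Icc (0 : ℝ) T))))
    (a b : ℝ) (hab : a < b) (hba : b - a ≤ T)
    (hAa : A a = 0) (hAb : A b = 0) (hApos : ∀ t ∈ Ioo a b, 0 < A t) :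
    0 < α ∧
      ∀ t ∈ Ioo a b, α < A t / (α * (t - b)) + B t + C t * (α * (t - b)) := by
  have hA' : ∀ x, sInf ((fun t => deriv A t) '' Icc (0 : ℝ) T) ≤ deriv A x := by
    refine periodic_sInf_le hT (hA.continuous_deriv le_rfl) fun x => ?_
    change deriv A (x + T) = deriv A x
    rw [← deriv_comp_add_const, funext hAper]
  have hB' : ∀ x, sInf ((fun t => |B t|) '' Icc (0 : ℝ) T) ≤ |B x| :=
    periodic_sInf_le (f := fun t => |B t|) hT hB.continuous.abs fun x => by simp only [hBper x]
  have hC' : ∀ x, |C x| ≤ sSup ((fun t => |C t|) '' Icc (0 : ℝ) T) :=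
    le_periodic_sSup (f := fun t => |C t|) hT hC.continuous.abs fun x => by simp only [hCper x]
  have hβ0 : 0 ≤ sInf ((fun t => |B t|) '' Icc (0 : ℝ) T) := by
    apply Real.sInf_nonneg
    rintro _ ⟨t, -, rfl⟩
    exact abs_nonneg _
  generalize sInf ((fun t => deriv A t) '' Icc (0 : ℝ) T) = μ at *
  generalize sInf ((fun t => |B t|) '' Icc (0 : ℝ) T) = β at *
  generalize sSup ((fun t => |C t|) '' Icc (0 : ℝ) T) = c at *
  have hc : 0 ≤ c := (abs_nonneg _).trans (hC' 0)
  have hK : 0 < 1 + T * c := by positivity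
  have hq : 0 < -μ / (1 + T * c) := div_pos (by linarith) hK
  have hα0 : 0 < α := hα ▸ Real.sqrt_pos.2 hq
  have hαK : α ^ 2 * (1 + T * c) = -μ := by
    rw [hα, Real.sq_sqrt hq.le, div_mul_cancel₀ _ hK.ne']
  have hβ : 2 * (α * (1 + T * c)) < β := by
    apply lt_of_pow_lt_pow_left₀ 2 hβ0
    calc (2 * (α * (1 + T * c))) ^ 2 = 4 * (α ^ 2 * (1 + T * c)) * (1 + T * c) := by ring
      _ = -4 * μ * (1 + T * c) := by rw [hαK]; ring
      _ < β ^ 2 := hcond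
  refine ⟨hα0, fun t ht => ?_⟩
  have htb : 0 < b - t := sub_pos.2 ht.2
  have hAt : A t ≤ -μ * (b - t) := by
    have hmvt := mul_sub_le_image_sub_of_le_deriv (hA.differentiable one_ne_zero) hA' ht.2.le
    linarith
  have h1 : -(α * (1 + T * c)) ≤ A t / (α * (t - b)) := by
    rw [le_div_iff_of_neg (mul_neg_of_pos_of_neg hα0 (by linarith))]
    calc A t ≤ -μ * (b - t) := hAt
      _ = -(α * (1 + T * c)) * (α * (t - b)) := by rw [← hαK]; ring
  have h2 : -(α * (T * c)) ≤ C t * (α * (t - b)) := by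
    have h3 : C t * (b - t) ≤ c * T :=
      mul_le_mul ((le_abs_self _).trans (hC' t)) (by linarith [ht.1]) htb.le hc
    have h4 := mul_le_mul_of_nonneg_left h3 hα0.le
    linarith
  have h5 : β ≤ B t := (hB' t).trans_eq (abs_of_pos (hBpos t))
  linarith
end

section
/- Let T > 0 and let A: ℝ → ℝ be C¹ and T-periodic, with at least one zero in [0,T], and assume min_{t∈[0,T]} A′(t) > −1/4. Then the normal form equation (NF) admits a C¹, T-periodic solution x*: ℝ → ℝ which has the sign of −A, i.e., for every t ∈ ℝ: x*(t) < 0 whenever A(t) > 0, x*(t) > 0 whenever A(t) < 0, and x*(t) = 0 if and only if A(t) = 0. -/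
open Set Filter Topology

/-!
Look for `x = -c A` with `c > 0`; such an `x` automatically has the sign of `-A`. Where `A ≠ 0`,
the equation for `x` becomes `A c' = 1 / c - 1 - A' c`, and it says `x' = 1 - 1 / c`. Let `ψ` be the
global flow of `t' = A t` (`exists_global_flow`). The equation for `c` is then an ordinary
differential equation along the orbits of `ψ`,
`d/ds c (ψ s t) = 1 / c - 1 - A' c` (with `c` and `A'` taken at `ψ s t`),
which makes sense at the zeros of `A` too: they are rest points, and there it reads
`1 / c - 1 - A' c = 0`.

Let `M` be a bound for `|A'|` and `A' ≥ -1/4 + κ` with `κ > 0`. The interval `[1 / (1 + M), 2]` is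
invariant in forward time, and on it the right-hand side has derivative `-1 / c² - A' ≤ -κ` in `c`,
so solutions contract. Hence there is exactly one continuous `c` with values in this interval that
solves the equation on every complete orbit. It is obtained in `exists_bounded_section` as the
fixed point of the Duhamel operator
`c ↦ ∫ s ≤ 0, exp (l s) * G (c (ψ s t), ψ s t)`, where `G = l c + 1 / c - 1 - A' c` and `l` is so
large that `G` is increasing in `c`, hence Lipschitz with constant `l - κ`. Uniqueness of the fixed
point makes `c` periodic.

Away from the zeros of `A`, orbits are local parametrizations of the line, so `c` is
differentiable and `x' = 1 - 1 / c`. At a zero, continuity of `c` gives `x' = -c A'`, which is again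
`1 - 1 / c` by the rest point equation. Thus `x'` is continuous, and
`x x' = -c A (1 - 1 / c) = A + x`.
-/

/-- A bounded Lipschitz vector field on the line has a global flow: boundedness makes the
Picard–Lindelöf theorem applicable on every interval `(-n, n)`, and uniqueness glues. -/
lemma exists_global_flow {A : ℝ → ℝ} {K : NNReal} (hLip : LipschitzWith K A) {L : NNReal}
    (hb : ∀ t, |A t| ≤ L) :
    ∃ ψ : ℝ → ℝ → ℝ, (∀ t, ψ 0 t = t) ∧ ∀ t τ, HasDerivAt (fun s => ψ s t) (A (ψ τ t)) τ := by
  have key : ∀ t : ℝ, ∀ n : ℝ, ∃ γ : ℝ → ℝ, γ 0 = t ∧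
      (0 < n → ∀ τ ∈ Ioo (-n) n, HasDerivAt γ (A (γ τ)) τ) := by
    intro t n
    by_cases hn : 0 < n
    swap
    · exact ⟨fun _ => t, rfl, fun h => absurd h hn⟩
    have h0 : (0 : ℝ) ∈ Icc (-n) n := ⟨by linarith, hn.le⟩
    have hPL : IsPicardLindelof (fun _ : ℝ => A) (⟨0, h0⟩ : Icc (-n) n) t
        (L * n.toNNReal) 0 L K :=
      { lipschitzOnWith := fun _ _ => hLip.lipschitzOnWith
        continuousOn := fun _ _ => continuousOn_const
        norm_le := fun _ _ x _ => hb x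
        mul_max_le := by simp [hn.le] }
    obtain ⟨γ, hγ0, hγ⟩ := hPL.exists_eq_forall_mem_Icc_hasDerivWithinAt₀
    exact ⟨γ, hγ0, fun _ τ hτ =>
      (hγ τ (Ioo_subset_Icc_self hτ)).hasDerivAt (Icc_mem_nhds hτ.1 hτ.2)⟩
  choose γ hγ0 hγ using key
  refine ⟨fun τ t => γ t (|τ| + 1) τ, fun t => hγ0 _ _, fun t τ => ?_⟩
  have hpos : ∀ s : ℝ, 0 < |s| + 1 := fun s => by positivity
  have hmem : ∀ s : ℝ, s ∈ Ioo (-(|s| + 1)) (|s| + 1) := fun s =>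
    ⟨by linarith [neg_abs_le s], by linarith [le_abs_self s]⟩
  have hd := hγ t (|τ| + 1) (hpos τ) τ (hmem τ)
  refine hd.congr_of_eventuallyEq ?_
  filter_upwards [Ioo_mem_nhds (hmem τ).1 (hmem τ).2] with s hs
  -- on the smaller of the two intervals both curves solve the same initial value problem
  have hn : 0 < min (|s| + 1) (|τ| + 1) := lt_min (hpos s) (hpos τ)
  have := ODE_solution_unique_of_mem_Ioo (v := fun _ => A) (s := fun _ => univ) (K := K)
    (a := -(min (|s| + 1) (|τ| + 1))) (b := min (|s| + 1) (|τ| + 1)) (t₀ := 0)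
    (f := γ t (|s| + 1)) (g := γ t (|τ| + 1))
    (fun _ _ => hLip.lipschitzOnWith) ⟨by linarith, hn⟩
    (fun r hr => ⟨hγ t _ (hpos s) r ⟨by linarith [hr.1, min_le_left (|s| + 1) (|τ| + 1)],
      hr.2.trans_le (min_le_left _ _)⟩, trivial⟩)
    (fun r hr => ⟨hγ t _ (hpos τ) r ⟨by linarith [hr.1, min_le_right (|s| + 1) (|τ| + 1)],
      hr.2.trans_le (min_le_right _ _)⟩, trivial⟩)
    (by rw [hγ0, hγ0])
  refine this ?_
  have h1 := hmem s
  constructor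
  · rcases min_choice (|s| + 1) (|τ| + 1) with h | h <;> rw [h]
    exacts [h1.1, hs.1]
  · exact lt_min h1.2 hs.2

lemma flow_unique {A : ℝ → ℝ} {K : NNReal} (hLip : LipschitzWith K A) {f g : ℝ → ℝ}
    (hf : ∀ τ, HasDerivAt f (A (f τ)) τ) (hg : ∀ τ, HasDerivAt g (A (g τ)) τ)
    (h0 : f 0 = g 0) : f = g :=
  ODE_solution_unique_univ (v := fun _ => A) (s := fun _ => univ) (K := K) (t₀ := 0)
    (fun _ => hLip.lipschitzOnWith) (fun τ => ⟨hf τ, trivial⟩) (fun τ => ⟨hg τ, trivial⟩) h0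

/-- Backward-time maps of the flow depend continuously on the initial point (Gronwall). -/
lemma continuous_flow_neg {A : ℝ → ℝ} {K : NNReal} (hLip : LipschitzWith K A)
    {ψ : ℝ → ℝ → ℝ} (h0 : ∀ t, ψ 0 t = t)
    (hψ : ∀ t τ, HasDerivAt (fun s => ψ s t) (A (ψ τ t)) τ) {σ : ℝ} (hσ : σ ≤ 0) :
    Continuous (ψ σ) := by
  have hrev : ∀ t τ, HasDerivAt (fun s => ψ (-s) t) (-A (ψ (-τ) t)) τ := fun t τ => by
    have := (hψ t (-τ)).scomp τ (hasDerivAt_neg τ)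
    simpa [Function.comp_def] using this
  have hL : LipschitzWith (Real.exp (K * -σ)).toNNReal (ψ σ) := by
    refine LipschitzWith.of_dist_le_mul fun a b => ?_
    have := dist_le_of_trajectories_ODE (v := fun _ x => -A x) (K := K) (a := 0) (b := -σ)
      (f := fun s => ψ (-s) a) (g := fun s => ψ (-s) b) (δ := dist a b)
      (fun _ => hLip.neg)
      (fun τ _ => (hrev a τ).continuousAt.continuousWithinAt)
      (fun τ _ => (hrev a τ).hasDerivWithinAt)
      (fun τ _ => (hrev b τ).continuousAt.continuousWithinAt)
      (fun τ _ => (hrev b τ).hasDerivWithinAt)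
      (by simp [h0]) (-σ) ⟨by linarith, le_rfl⟩
    rw [Real.coe_toNNReal _ (Real.exp_pos _).le, mul_comm]
    simpa using this
  exact hL.continuous

lemma integrableOn_exp_mul {l B : ℝ} (hl : 0 < l) {h : ℝ → ℝ} (hc : Continuous h)
    (hB : ∀ s, |h s| ≤ B) (b : ℝ) :
    MeasureTheory.IntegrableOn (fun s => Real.exp (l * s) * h s) (Iic b) := by
  refine MeasureTheory.Integrable.mono' ((integrableOn_exp_mul_Iic hl b).mul_const B)
    (by fun_prop) (MeasureTheory.ae_of_all _ fun s => ?_)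
  rw [Real.norm_eq_abs, abs_mul, Real.abs_exp]
  exact mul_le_mul_of_nonneg_left (hB s) (Real.exp_pos _).le

/-- Variation of constants: the integral over the past solves `u' = h - l u`. -/
lemma hasDerivAt_duhamel {l B : ℝ} (hl : 0 < l) {h : ℝ → ℝ} (hc : Continuous h)
    (hB : ∀ s, |h s| ≤ B) (τ : ℝ) :
    HasDerivAt (fun τ => ∫ s in Iic (0 : ℝ), Real.exp (l * s) * h (s + τ))
      (h τ - l * ∫ s in Iic (0 : ℝ), Real.exp (l * s) * h (s + τ)) τ := by
  have hint := integrableOn_exp_mul hl hc hB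
  have hshift : ∀ τ, ∫ s in Iic (0 : ℝ), Real.exp (l * s) * h (s + τ)
      = Real.exp (-(l * τ)) * ((∫ s in Iic (0 : ℝ), Real.exp (l * s) * h s)
        + ∫ s in (0 : ℝ)..τ, Real.exp (l * s) * h s) := by
    intro τ
    have e1 : ∫ s in Iic τ, Real.exp (l * s) * h s
        = ∫ s in Iic (0 : ℝ), Real.exp (l * (s + τ)) * h (s + τ) := by
      rw [← MeasureTheory.integral_indicator measurableSet_Iic,
        ← MeasureTheory.integral_indicator measurableSet_Iic,
        ← MeasureTheory.integral_add_right_eq_self _ τ]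
      congr 1
      ext s
      simp [indicator]
    rw [← intervalIntegral.integral_Iic_sub_Iic (hint 0) (hint τ), add_sub_cancel, e1,
      ← MeasureTheory.integral_const_mul]
    congr 1
    ext s
    rw [← mul_assoc, ← Real.exp_add]
    ring_nf
  have hFTC : HasDerivAt (fun τ => ∫ s in (0 : ℝ)..τ, Real.exp (l * s) * h s)
      (Real.exp (l * τ) * h τ) τ :=
    (Continuous.integral_hasStrictDerivAt (by fun_prop) 0 τ).hasDerivAt
  have hexp : HasDerivAt (fun τ : ℝ => Real.exp (-(l * τ))) (Real.exp (-(l * τ)) * (-l)) τ := by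
    simpa using (((hasDerivAt_id τ).const_mul l).neg).exp
  have := hexp.mul (hFTC.const_add (∫ s in Iic (0 : ℝ), Real.exp (l * s) * h s))
  rw [funext hshift]
  refine this.congr_deriv ?_
  have he : Real.exp (-(l * τ)) * Real.exp (l * τ) = 1 := by
    rw [← Real.exp_add]; simp
  rw [hshift]
  linear_combination (h τ) * he

/-- Let `G` take values in `[l m, l M]` and be Lipschitz in its first argument with a constant
smaller than `l`. Then the equation `c' = G c - l c` along the orbits of a flow `ψ` on the line has
a continuous solution `c` with values in `[m, M]`, periodic if the data are: the fixed point of the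
Duhamel operator on bounded continuous functions. -/
lemma exists_bounded_section {ψ : ℝ → ℝ → ℝ}
    (hadd : ∀ s τ t, ψ s (ψ τ t) = ψ (s + τ) t)
    (hψt : ∀ t, Continuous fun s => ψ s t) (hψc : ∀ s ≤ 0, Continuous (ψ s))
    {T : ℝ} (hψT : ∀ s t, ψ s (t + T) = ψ s t + T)
    {G : ℝ → ℝ → ℝ} (hGc : Continuous fun p : ℝ × ℝ => G p.1 p.2)
    (hGT : ∀ v t, G v (t + T) = G v t)
    {l m M q : ℝ} (hl : 0 < l) (hm : 0 < m) (hq : 0 ≤ q) (hql : q < l)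
    (hlow : ∀ v t, l * m ≤ G v t) (hup : ∀ v t, G v t ≤ l * M)
    (hGL : ∀ v w t, |G v t - G w t| ≤ q * |v - w|) :
    ∃ c : ℝ → ℝ, Continuous c ∧ (∀ t, m ≤ c t ∧ c t ≤ M) ∧ Function.Periodic c T ∧
      ∀ t τ, HasDerivAt (fun s => c (ψ s t)) (G (c (ψ τ t)) (ψ τ t) - l * c (ψ τ t)) τ := by
  have hGabs : ∀ v t, |G v t| ≤ l * M := fun v t => by
    rw [abs_of_nonneg ((mul_pos hl hm).le.trans (hlow v t))]; exact hup v t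
  have hexpint : ∫ s in Iic (0 : ℝ), Real.exp (l * s) = 1 / l := by
    rw [integral_exp_mul_Iic hl]; simp
  have hexpi := integrableOn_exp_mul_Iic hl 0
  have hcont : ∀ c : ℝ → ℝ, Continuous c → ∀ t, Continuous fun s => G (c (ψ s t)) (ψ s t) :=
    fun c hc t => hGc.comp ((hc.comp (hψt t)).prodMk (hψt t))
  have hint : ∀ c : ℝ → ℝ, Continuous c → ∀ t, MeasureTheory.IntegrableOn
      (fun s => Real.exp (l * s) * G (c (ψ s t)) (ψ s t)) (Iic 0) :=
    fun c hc t => integrableOn_exp_mul hl (hcont c hc t) (fun s => hGabs _ _) 0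
  have hbd : ∀ c : ℝ → ℝ, Continuous c → ∀ t,
      m ≤ ∫ s in Iic (0 : ℝ), Real.exp (l * s) * G (c (ψ s t)) (ψ s t) ∧
      ∫ s in Iic (0 : ℝ), Real.exp (l * s) * G (c (ψ s t)) (ψ s t) ≤ M := by
    intro c hc t
    have e : ∀ r : ℝ, ∫ s in Iic (0 : ℝ), Real.exp (l * s) * (l * r) = r := fun r => by
      rw [MeasureTheory.integral_mul_const, hexpint]; field_simp
    constructor
    · conv_lhs => rw [← e m]
      exact MeasureTheory.integral_mono (hexpi.mul_const _) (hint c hc t)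
        fun s => mul_le_mul_of_nonneg_left (hlow _ _) (Real.exp_pos _).le
    · conv_rhs => rw [← e M]
      exact MeasureTheory.integral_mono (hint c hc t) (hexpi.mul_const _)
        fun s => mul_le_mul_of_nonneg_left (hup _ _) (Real.exp_pos _).le
  have hFc : ∀ c : ℝ → ℝ, Continuous c → Continuous fun t =>
      ∫ s in Iic (0 : ℝ), Real.exp (l * s) * G (c (ψ s t)) (ψ s t) := by
    intro c hc
    refine MeasureTheory.continuous_of_dominated
      (bound := fun s => Real.exp (l * s) * (l * M)) (fun t => (hint c hc t).1)
      (fun t => MeasureTheory.ae_of_all _ fun s => ?_) (hexpi.mul_const _) ?_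
    · rw [Real.norm_eq_abs, abs_mul, Real.abs_exp]
      exact mul_le_mul_of_nonneg_left (hGabs _ _) (Real.exp_pos _).le
    · refine (MeasureTheory.ae_restrict_mem measurableSet_Iic).mono fun s hs => ?_
      exact continuous_const.mul
        (hGc.comp ((hc.comp (hψc s hs)).prodMk (hψc s hs)))
  let F : BoundedContinuousFunction ℝ ℝ → BoundedContinuousFunction ℝ ℝ := fun c =>
    BoundedContinuousFunction.ofNormedAddCommGroup
      (fun t => ∫ s in Iic (0 : ℝ), Real.exp (l * s) * G (c (ψ s t)) (ψ s t))
      (hFc c c.continuous) M (fun t => by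
        have := hbd c c.continuous t
        rw [Real.norm_eq_abs, abs_of_nonneg (hm.le.trans this.1)]
        exact this.2)
  have hFapp : ∀ c t, F c t = ∫ s in Iic (0 : ℝ), Real.exp (l * s) * G (c (ψ s t)) (ψ s t) :=
    fun _ _ => rfl
  have hF : ContractingWith (q / l).toNNReal F := by
    refine ⟨by simpa [← NNReal.coe_lt_coe, Real.coe_toNNReal _ (div_nonneg hq hl.le)] using
      (div_lt_one hl).2 hql, LipschitzWith.of_dist_le_mul fun c d => ?_⟩
    rw [Real.coe_toNNReal _ (div_nonneg hq hl.le)]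
    refine (BoundedContinuousFunction.dist_le (by positivity)).2 fun t => ?_
    rw [hFapp, hFapp, Real.dist_eq,
      ← MeasureTheory.integral_sub (hint c c.continuous t) (hint d d.continuous t)]
    have e : q / l * dist c d = ∫ s in Iic (0 : ℝ), Real.exp (l * s) * (q * dist c d) := by
      rw [MeasureTheory.integral_mul_const, hexpint]; ring
    rw [e, ← Real.norm_eq_abs]
    refine MeasureTheory.norm_integral_le_of_norm_le (hexpi.mul_const _)
      (MeasureTheory.ae_of_all _ fun s => ?_)
    rw [← mul_sub, Real.norm_eq_abs, abs_mul, Real.abs_exp]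
    refine mul_le_mul_of_nonneg_left ((hGL _ _ _).trans ?_) (Real.exp_pos _).le
    refine mul_le_mul_of_nonneg_left ?_ hq
    rw [← Real.dist_eq]
    exact BoundedContinuousFunction.dist_coe_le_dist _
  obtain ⟨c, hfix⟩ : ∃ c, F c = c := ⟨_, hF.fixedPoint_isFixedPt⟩
  have hcF : ∀ t, c t = ∫ s in Iic (0 : ℝ), Real.exp (l * s) * G (c (ψ s t)) (ψ s t) :=
    fun t => by rw [← hFapp, hfix]
  refine ⟨c, c.continuous, fun t => by rw [hcF]; exact hbd c c.continuous t, ?_, ?_⟩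
  · -- the translate by `T` is another fixed point
    let d : BoundedContinuousFunction ℝ ℝ := c.compContinuous ⟨fun t => t + T, by fun_prop⟩
    have hd : ∀ t, d t = c (t + T) := fun _ => rfl
    have : F d = d := by
      ext t
      rw [hFapp, hd, hcF]
      simp only [hd, hψT, hGT]
    have hdc : d = c := hF.fixedPoint_unique' this hfix
    intro t
    rw [← hd, hdc]
  · intro t τ
    have := hasDerivAt_duhamel hl (hcont c c.continuous t) (fun s => hGabs _ _) τ
    have e : ∀ τ, c (ψ τ t)
        = ∫ s in Iic (0 : ℝ), Real.exp (l * s) * G (c (ψ (s + τ) t)) (ψ (s + τ) t) := by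
      intro τ
      rw [hcF]
      simp only [hadd]
    rw [funext e]
    rw [← e] at this
    exact this

/-- The map `v ↦ l v + 1 / v - 1 - a v` with `l = (1 + M)² + M` is increasing and
`(l - κ)`-Lipschitz on `[1 / (1 + M), 2]`; the bound `v ≤ 2` matters because `1 / v² ≥ 1/4` there,
which is what `a ≥ -1/4 + κ` can compensate. -/
lemma reaction_bounds {M κ a v w : ℝ} (hM : 0 ≤ M) (ha : -(1 / 4) + κ ≤ a) (haM : a ≤ M)
    (hκ : 0 < κ) (hv : 1 / (1 + M) ≤ v) (hvw : v ≤ w) (hw : w ≤ 2) :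
    0 ≤ (((1 + M) ^ 2 + M) * w + 1 / w - 1 - a * w) - (((1 + M) ^ 2 + M) * v + 1 / v - 1 - a * v) ∧
    (((1 + M) ^ 2 + M) * w + 1 / w - 1 - a * w) - (((1 + M) ^ 2 + M) * v + 1 / v - 1 - a * v)
      ≤ ((1 + M) ^ 2 + M - κ) * (w - v) := by
  have hM1 : 0 < 1 + M := by linarith
  have hv0 : 0 < v := lt_of_lt_of_le (by positivity) hv
  have hw0 : 0 < w := hv0.trans_le hvw
  have e : (((1 + M) ^ 2 + M) * w + 1 / w - 1 - a * w)
      - (((1 + M) ^ 2 + M) * v + 1 / v - 1 - a * v)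
      = ((1 + M) ^ 2 + M - 1 / v * (1 / w) - a) * (w - v) := by
    field_simp; ring
  have h1 : 1 / v ≤ 1 + M := by
    rw [div_le_iff₀ hv0]; rw [div_le_iff₀ hM1] at hv; linarith
  have h2 : 1 / w ≤ 1 / v := one_div_le_one_div_of_le hv0 hvw
  have h3 : 1 / 2 ≤ 1 / w := one_div_le_one_div_of_le hw0 hw
  rw [e]
  constructor
  · refine mul_nonneg ?_ (by linarith)
    nlinarith
  · refine mul_le_mul_of_nonneg_right ?_ (by linarith)
    nlinarith

/-- Away from the zeros of `A` the orbit through `t` is a local parametrization of the line, so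
differentiability along orbits is differentiability. -/
lemma hasDerivAt_of_flow {A c : ℝ → ℝ} {γ : ℝ → ℝ} (hA : Continuous A) {t d : ℝ} (h0 : γ 0 = t)
    (hγ : ∀ τ, HasDerivAt γ (A (γ τ)) τ) (hc : HasDerivAt (fun s => c (γ s)) d 0)
    (ht : A t ≠ 0) : HasDerivAt c (d / A t) t := by
  have hγc : Continuous γ := continuous_iff_continuousAt.2 fun τ => (hγ τ).continuousAt
  have hs : HasStrictDerivAt γ (A (γ 0)) 0 :=
    hasStrictDerivAt_of_hasDerivAt_of_continuousAt (f' := fun τ => A (γ τ))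
      (Eventually.of_forall hγ) (hA.comp hγc).continuousAt
  have hne : A (γ 0) ≠ 0 := by rwa [h0]
  have hinv := (hs.to_localInverse hne).hasDerivAt
  have himg : hs.localInverse γ (A (γ 0)) 0 hne (γ 0) = 0 :=
    HasStrictFDerivAt.localInverse_apply_image _
  have hright : ∀ᶠ y in 𝓝 (γ 0), γ (hs.localInverse γ (A (γ 0)) 0 hne y) = y :=
    HasStrictFDerivAt.eventually_right_inverse _
  have hcomp := HasDerivAt.comp (γ 0) (by rw [himg]; exact hc) hinv
  have := hcomp.congr_of_eventuallyEq (f₁ := c) (hright.mono fun y hy => by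
    simp only [Function.comp_apply, hy])
  rw [h0] at this
  exact this

/-- Product rule at a zero of the differentiable factor, where the other factor need only be
continuous. -/
lemma hasDerivAt_mul_of_zero {A c : ℝ → ℝ} {a t : ℝ} (hc : ContinuousAt c t) (hA : HasDerivAt A a t)
    (ht : A t = 0) : HasDerivAt (fun s => c s * A s) (c t * a) t := by
  rw [hasDerivAt_iff_tendsto_slope] at hA ⊢
  have h1 := (hc.tendsto.mono_left nhdsWithin_le_nhds).mul hA
  refine h1.congr fun s => ?_
  simp only [slope_def_field, ht]
  ring

/-- if A is C¹, T-periodic, has a zero in [0,T] and min A′ > −1/4, then the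
normal form equation (NF): x·x′ = A(t) + x has a C¹, T-periodic solution with the sign of −A. -/
theorem normal_form_periodic_solution_exists
    (T : ℝ) (hT : 0 < T) (A : ℝ → ℝ) (hA : ContDiff ℝ 1 A)
    (hAper : Function.Periodic A T)
    (hzero : ∃ t ∈ Icc (0 : ℝ) T, A t = 0)
    (hmin : sInf ((fun t => deriv A t) '' Icc (0 : ℝ) T) > -(1 / 4)) :
    ∃ x : ℝ → ℝ, ContDiff ℝ 1 x ∧ Function.Periodic x T ∧
      (∀ t : ℝ, x t * deriv x t = A t + x t) ∧
      (∀ t : ℝ, 0 < A t → x t < 0) ∧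
      (∀ t : ℝ, A t < 0 → 0 < x t) ∧
      (∀ t : ℝ, x t = 0 ↔ A t = 0) := by
  have hAd : Differentiable ℝ A := hA.differentiable one_ne_zero
  have hA'c : Continuous (deriv A) := hA.continuous_deriv_one
  have hAD : ∀ t, HasDerivAt A (deriv A t) t := fun t => (hAd t).hasDerivAt
  have hA'per : Function.Periodic (deriv A) T := fun t => by
    rw [← deriv_comp_add_const]
    congr 1
    exact funext hAper
  -- periodicity turns the bounds on `[0, T]` into global ones
  obtain ⟨M₀, hM₀⟩ := isCompact_Icc.exists_bound_of_continuousOn (s := Icc (0 : ℝ) T)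
    hA'c.continuousOn
  obtain ⟨L₀, hL₀⟩ := isCompact_Icc.exists_bound_of_continuousOn (s := Icc (0 : ℝ) T)
    hA.continuous.continuousOn
  have hM : ∀ t, |deriv A t| ≤ M₀ := fun t => by
    obtain ⟨y, hy, hty⟩ := hA'per.exists_mem_Ico₀ hT t
    rw [hty]; exact hM₀ y (Ico_subset_Icc_self hy)
  have hL : ∀ t, |A t| ≤ L₀ := fun t => by
    obtain ⟨y, hy, hty⟩ := hAper.exists_mem_Ico₀ hT t
    rw [hty]; exact hL₀ y (Ico_subset_Icc_self hy)
  obtain ⟨κ, hκ, hκA⟩ : ∃ κ > 0, ∀ t, -(1 / 4) + κ ≤ deriv A t := by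
    refine ⟨sInf ((fun t => deriv A t) '' Icc (0 : ℝ) T) + 1 / 4, by linarith, fun t => ?_⟩
    obtain ⟨y, hy, hty⟩ := hA'per.exists_mem_Ico₀ hT t
    have := csInf_le (isCompact_Icc.image hA'c).bddBelow
      (mem_image_of_mem (fun t => deriv A t) (Ico_subset_Icc_self hy))
    rw [hty]; linarith
  have hM0 : 0 ≤ M₀ := (abs_nonneg _).trans (hM 0)
  have hL0 : 0 ≤ L₀ := (abs_nonneg _).trans (hL 0)
  lift M₀ to NNReal using hM0
  lift L₀ to NNReal using hL0
  have hLip : LipschitzWith M₀ A :=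
    lipschitzWith_of_nnnorm_deriv_le hAd fun t => by
      rw [← NNReal.coe_le_coe, coe_nnnorm]; exact hM t
  obtain ⟨ψ, hψ0, hψ⟩ := exists_global_flow hLip hL
  have hadd : ∀ s τ t, ψ s (ψ τ t) = ψ (s + τ) t := fun s τ t => by
    refine congrFun (flow_unique hLip (hψ (ψ τ t)) (g := fun s => ψ (s + τ) t) (fun r => ?_)
      (by simp [hψ0])) s
    exact (hψ t (r + τ)).comp_add_const r τ
  have hψT : ∀ s t, ψ s (t + T) = ψ s t + T := fun s t => by
    refine congrFun (flow_unique hLip (hψ (t + T)) (g := fun s => ψ s t + T) (fun r => ?_)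
      (by simp [hψ0])) s
    rw [hAper]
    exact (hψ t r).add_const T
  have hfixed : ∀ t, A t = 0 → ∀ s, ψ s t = t := fun t ht s => by
    refine congrFun (flow_unique hLip (hψ t) (g := fun _ => t) (fun r => ?_) (hψ0 t)) s
    rw [ht]
    exact hasDerivAt_const r t
  set M : ℝ := (M₀ : ℝ) with hMdef
  have hM0 : 0 ≤ M := M₀.2
  have hM1 : 0 < 1 + M := by linarith
  set l : ℝ := (1 + M) ^ 2 + M with hl
  set m : ℝ := 1 / (1 + M) with hm
  have hmpos : 0 < m := by positivity
  have hm1 : m ≤ 1 := by rw [hm, div_le_one hM1]; linarith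
  have hMκ : -(1 / 4) + κ ≤ M := (hκA 0).trans ((le_abs_self _).trans (hM 0))
  have hlpos : 0 < l := by positivity
  have hlκ : κ ≤ l := by nlinarith
  -- the values of the profile are clamped to `[m, 2]`
  let k : ℝ → ℝ := fun v => max m (min v 2)
  have hkm : ∀ v, m ≤ k v := fun v => le_max_left _ _
  have hk2 : ∀ v, k v ≤ 2 := fun v => max_le (by linarith) (min_le_right _ _)
  have hkpos : ∀ v, 0 < k v := fun v => hmpos.trans_le (hkm v)
  have hkc : Continuous k := by fun_prop
  have hkmono : Monotone k := fun v w h => max_le_max le_rfl (min_le_min h le_rfl)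
  have hkL : ∀ v w, v ≤ w → k w - k v ≤ w - v := fun v w h => by
    simp only [k]; grind
  have hkid : ∀ v, m ≤ v → v ≤ 2 → k v = v := fun v h1 h2 => by
    simp only [k]; rw [min_eq_left h2, max_eq_right h1]
  let G : ℝ → ℝ → ℝ := fun v t => l * k v + 1 / k v - 1 - deriv A t * k v
  have hbnd : ∀ t {v w : ℝ}, m ≤ v → v ≤ w → w ≤ 2 → _ := fun t v w h1 h2 h3 =>
    reaction_bounds hM0 (hκA t) ((le_abs_self _).trans (hM t)) hκ h1 h2 h3
  have hGL' : ∀ v w t, v ≤ w → |G v t - G w t| ≤ (l - κ) * |v - w| := fun v w t h => by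
    have := hbnd t (hkm v) (hkmono h) (hk2 w)
    rw [abs_sub_comm, abs_sub_comm v w, abs_of_nonneg this.1, abs_of_nonneg (sub_nonneg.2 h)]
    exact this.2.trans (mul_le_mul_of_nonneg_left (hkL v w h) (by linarith))
  obtain ⟨c, hcc, hcb, hcT, hcψ⟩ := exists_bounded_section (ψ := ψ) hadd
    (fun t => continuous_iff_continuousAt.2 fun τ => (hψ t τ).continuousAt)
    (fun s hs => continuous_flow_neg hLip hψ0 hψ hs) hψT (G := G) (l := l) (m := m) (M := 2)
    (q := l - κ)
    (by
      have : ∀ p : ℝ × ℝ, k p.1 ≠ 0 := fun p => (hkpos _).ne'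
      simp only [G]
      fun_prop (disch := simpa using this))
    (fun v t => by simp only [G]; rw [hA'per]) hlpos hmpos (by linarith) (by linarith)
    (fun v t => by
      have h1 := (hbnd t le_rfl (hkm v) (hk2 v)).1
      have h2 : 1 / m = 1 + M := by rw [hm, one_div_one_div]
      have h3 := (le_abs_self _).trans (hM t)
      simp only [G]
      nlinarith)
    (fun v t => by
      have h1 := (hbnd t (hkm v) (hk2 v) le_rfl).1
      have h2 := hκA t
      simp only [G]
      linarith)
    (fun v w t => by
      rcases le_total v w with h | h
      · exact hGL' v w t h
      · rw [abs_sub_comm, abs_sub_comm v w]; exact hGL' w v t h)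
  have hcpos : ∀ t, 0 < c t := fun t => hmpos.trans_le (hcb t).1
  have hcder : ∀ t, HasDerivAt (fun s => c (ψ s t)) (1 / c t - 1 - deriv A t * c t) 0 := fun t => by
    refine (hcψ t 0).congr_deriv ?_
    simp only [G, hψ0, hkid _ (hcb t).1 (hcb t).2]
    ring
  have hx : ∀ t, HasDerivAt (fun s => -(c s * A s)) (1 - 1 / c t) t := fun t => by
    have hct := (hcpos t).ne'
    by_cases ht : A t = 0
    · -- a zero of `A` is a rest point of the flow, so the reaction term vanishes there
      have hc0 : HasDerivAt (fun s => c (ψ s t)) 0 0 := by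
        simp only [hfixed t ht]
        exact hasDerivAt_const _ _
      have hroot := hc0.unique (hcder t)
      refine (hasDerivAt_mul_of_zero hcc.continuousAt (hAD t) ht).neg.congr_deriv ?_
      linear_combination -hroot
    · have hc' := hasDerivAt_of_flow hA.continuous (hψ0 t) (hψ t) (hcder t) ht
      refine (hc'.mul (hAD t)).neg.congr_deriv ?_
      field_simp
      ring
  refine ⟨fun t => -(c t * A t), ?_, ?_, ?_, ?_, ?_, ?_⟩
  · rw [contDiff_one_iff_deriv]
    refine ⟨fun t => (hx t).differentiableAt, ?_⟩
    rw [funext fun t => (hx t).deriv]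
    exact continuous_const.sub (continuous_const.div hcc fun t => (hcpos t).ne')
  · intro t
    simp only [hcT t, hAper t]
  · intro t
    rw [(hx t).deriv]
    have hct := (hcpos t).ne'
    field_simp
    ring
  · intro t ht
    have := mul_pos (hcpos t) ht
    simp only
    linarith
  · intro t ht
    have := mul_neg_of_pos_of_neg (hcpos t) ht
    simp only
    linarith
  · intro t
    simp [(hcpos t).ne']
end
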